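/- arXiv:2007.05885 — 2 statements merged into one kernel-verified Lean document; each statement's English description precedes it below -/
import Mathlib

section
/- (ZF) For every countable non-standard model N of PA and every countable set A ⊆ 2^ω − SSy(N), there is a family (M_X : X ⊆ 2^ω) of models such that each M_X is an elementary extension of N, |M_X| = |SSy(M_X)| = max{ω, |X|}, for all X, Y ⊆ 2^ω one has X ⊆ Y ⟺ M_X ≼ M_Y ⟺ SSy(M_X) ⊆ SSy(M_Y), and moreover A ∩ SSy(M_X) = ∅ for all X ⊆ 2^ω. -/
open FirstOrder FirstOrder.Language

/-- Function symbols of the language of arithmetic: `0`, `1`, `+`, `·`. -/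
inductive arithFunc : ℕ → Type
  | zero : arithFunc 0
  | one : arithFunc 0
  | add : arithFunc 2
  | mul : arithFunc 2
  deriving DecidableEq

/-- Relation symbols of the language of arithmetic: `<`. -/
inductive arithRel : ℕ → Type
  | lt : arithRel 2
  deriving DecidableEq

/-- The first-order language of arithmetic `{0, 1, +, ·, <}`. -/
def arith : FirstOrder.Language := ⟨arithFunc, arithRel⟩

namespace Arith

variable {M : Type*} [arith.Structure M]

/-- The interpretation of `0`. -/
def zeroM (M : Type*) [arith.Structure M] : M :=
  Structure.funMap (L := arith) arithFunc.zero ![]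

/-- The interpretation of `1`. -/
def oneM (M : Type*) [arith.Structure M] : M :=
  Structure.funMap (L := arith) arithFunc.one ![]

/-- The interpretation of `+`. -/
def addM (x y : M) : M := Structure.funMap (L := arith) arithFunc.add ![x, y]

/-- The interpretation of `·`. -/
def mulM (x y : M) : M := Structure.funMap (L := arith) arithFunc.mul ![x, y]

/-- The interpretation of `<`. -/
def ltM (x y : M) : Prop := Structure.RelMap (L := arith) arithRel.lt ![x, y]

/-- Non-strict order. -/
def leM (x y : M) : Prop := ltM x y ∨ x = y

/-- The numeral `n` in `M`: `0`, or `1 + 1 + ⋯ + 1`. -/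
def numeral (M : Type*) [arith.Structure M] : ℕ → M
  | 0 => zeroM M
  | n + 1 => addM (numeral M n) (oneM M)

/-- The standard `arith`-structure on `ℕ`. -/
instance : arith.Structure ℕ where
  funMap {n} f v :=
    match f with
    | .zero => 0
    | .one => 1
    | .add => v 0 + v 1
    | .mul => v 0 * v 1
  RelMap {n} r v :=
    match r with
    | .lt => v 0 < v 1

/-- `M` is a model of Peano arithmetic: it satisfies the finitely many basic axioms of
`PA` together with induction for all parametrically definable sets (which is equivalent
to the usual first-order induction scheme). -/
def IsPAModel (M : Type*) [arith.Structure M] : Prop :=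
  (∀ x : M, addM x (zeroM M) = x) ∧
  (∀ x y : M, addM x (addM y (oneM M)) = addM (addM x y) (oneM M)) ∧
  (∀ x : M, mulM x (zeroM M) = zeroM M) ∧
  (∀ x y : M, mulM x (addM y (oneM M)) = addM (mulM x y) x) ∧
  (∀ x : M, ¬ ltM x (zeroM M)) ∧
  (∀ x y : M, ltM x (addM y (oneM M)) ↔ (ltM x y ∨ x = y)) ∧
  (∀ x : M, addM x (oneM M) ≠ zeroM M) ∧
  (∀ x y : M, addM x (oneM M) = addM y (oneM M) → x = y) ∧
  (∀ s : Set M, Set.Definable₁ (Set.univ : Set M) arith s →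
    zeroM M ∈ s → (∀ x ∈ s, addM x (oneM M) ∈ s) → ∀ x : M, x ∈ s)

/-- An element of `M` is standard if it is a numeral. -/
def IsStd (x : M) : Prop := ∃ n : ℕ, x = numeral M n

/-- `M` is a non-standard model of `PA`: a model of `PA` not isomorphic to the standard
model `ℕ`. -/
def NonstandardModel (M : Type*) [arith.Structure M] : Prop :=
  IsPAModel M ∧ ¬ Nonempty (M ≃[arith] ℕ)

/-- `(x)_i = 1`: the `i`-th binary digit of `x` is `1`, for standard `i`.  This is expressed
by saying that `x = u·2^(i+1) + (2^i + v)` with `v < 2^i`, where `2^i`, `2^(i+1)` are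
numerals. -/
def digitB (x : M) (i : ℕ) : Prop :=
  ∃ u v : M, x = addM (mulM u (numeral M (2 ^ (i + 1)))) (addM (numeral M (2 ^ i)) v) ∧
    ltM v (numeral M (2 ^ i))

/-- The standard system of `M`: the collection of subsets of `ℕ` coded by some
non-standard element of `M` (via its standard binary digits). -/
def SSy (M : Type*) [arith.Structure M] : Set (Set ℕ) :=
  {X | ∃ a : M, ¬ IsStd a ∧ ∀ i : ℕ, i ∈ X ↔ digitB a i}

/-- A function `M → M` is definable (with parameters) if its graph is a definable set. -/
def DefinableFun₁ (f : M → M) : Prop :=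
  Set.Definable (Set.univ : Set M) arith {v : Fin 2 → M | f (v 0) = v 1}

/-- A `k`-ary function `M^k → M` is definable (with parameters) if its graph is a
definable set. -/
def DefinableFun {k : ℕ} (F : (Fin k → M) → M) : Prop :=
  Set.Definable (Set.univ : Set M) arith
    {v : Fin (k + 1) → M | F (fun i => v i.castSucc) = v (Fin.last k)}

/-- `c` is the internal cardinality of the set `D ⊆ M`: there is an `M`-definable
bijection between `{x : x < c}` and `D`. -/
def InternalCard (D : Set M) (c : M) : Prop :=
  ∃ f : M → M, DefinableFun₁ f ∧ Set.BijOn f {x : M | ltM x c} D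

/-- `y = 2^x` in the model `M`, expressed via the existence of a definable function
satisfying the recursion of the base-`2` exponential up to `x`. -/
def IsPow2 (x y : M) : Prop :=
  ∃ f : M → M, DefinableFun₁ f ∧ f (zeroM M) = oneM M ∧
    (∀ z : M, ltM z x → f (addM z (oneM M)) = addM (f z) (f z)) ∧ f x = y

end Arith

namespace Arith

section Definability

variable {M : Type*} [arith.Structure M] {α S : Type*} {A : Set M}

/-- A predicate on tuples is definable (with parameters in `A`) if its extension is. -/
@[fun_prop]
def DefPred (A : Set M) (P : (α → M) → Prop) : Prop :=
  A.Definable arith {v | P v}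

variable {P Q : (α → M) → Prop} {f g : (α → M) → M}

@[fun_prop]
theorem DefPred.and (hP : DefPred A P) (hQ : DefPred A Q) : DefPred A fun v => P v ∧ Q v :=
  hP.inter hQ

@[fun_prop]
theorem DefPred.or (hP : DefPred A P) (hQ : DefPred A Q) : DefPred A fun v => P v ∨ Q v :=
  hP.union hQ

@[fun_prop]
theorem DefPred.not (hP : DefPred A P) : DefPred A fun v => ¬ P v :=
  hP.compl

@[fun_prop]
theorem DefPred.imp (hP : DefPred A P) (hQ : DefPred A Q) : DefPred A fun v => P v → Q v := by
  simp only [imp_iff_not_or]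
  fun_prop

@[fun_prop]
theorem DefPred.iff (hP : DefPred A P) (hQ : DefPred A Q) : DefPred A fun v => (P v ↔ Q v) := by
  simp only [iff_def]
  fun_prop

theorem DefPred.comp {β : Type*} {P : (β → M) → Prop} (hP : DefPred A P) (e : β → α) :
    DefPred A fun v => P fun i => v (e i) :=
  Set.Definable.preimage_comp e hP

theorem DefPred.exists_tuple [Finite S] {P : (α → M) → (S → M) → Prop}
    (h : DefPred A fun w : α ⊕ S → M => P (fun i => w (.inl i)) (fun s => w (.inr s))) :
    DefPred A fun v => ∃ x, P v x :=
  Set.Definable.exists_of_finite h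

theorem DefPred.forall_tuple [Finite S] {P : (α → M) → (S → M) → Prop}
    (h : DefPred A fun w : α ⊕ S → M => P (fun i => w (.inl i)) (fun s => w (.inr s))) :
    DefPred A fun v => ∀ x, P v x :=
  Set.Definable.forall_of_finite h

@[fun_prop]
theorem DefPred.exists {P : (α → M) → M → Prop}
    (h : DefPred A fun w : Option α → M => P (fun i => w (some i)) (w none)) :
    DefPred A fun v => ∃ y, P v y := by
  have := DefPred.exists_tuple (S := Unit) (P := fun v x => P v (x ()))
    (h.comp fun o : Option α => o.elim (Sum.inr ()) Sum.inl)
  convert! this using 3 with v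
  exact ⟨fun ⟨y, hy⟩ => ⟨fun _ => y, hy⟩, fun ⟨x, hx⟩ => ⟨x (), hx⟩⟩

@[fun_prop]
theorem DefPred.forall {P : (α → M) → M → Prop}
    (h : DefPred A fun w : Option α → M => P (fun i => w (some i)) (w none)) :
    DefPred A fun v => ∀ y, P v y := by
  have : DefPred A fun v => ¬ ∃ y, ¬ P v y := (DefPred.exists h.not).not
  simpa using this

theorem DefPred.forall_finite [Finite S] {P : S → (α → M) → Prop} (h : ∀ s, DefPred A (P s)) :
    DefPred A fun v => ∀ s, P s v := by
  have := Set.definable_iInter_of_finite h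
  rwa [← Set.ofPred_forall] at this

@[fun_prop]
theorem DefPred.eq (hf : A.DefinableFun arith f) (hg : A.DefinableFun arith g) :
    DefPred A fun v => f v = g v :=
  hf.ofPred_eq hg

theorem DefPred.subst {n : ℕ} {P : (Fin n → M) → Prop} (hP : DefPred A P)
    {F : Fin n → (α → M) → M} (hF : ∀ i, A.DefinableFun arith (F i)) :
    DefPred A fun v => P fun i => F i v :=
  Set.Definable.preimage_map (F := fun v i => F i v) hF hP

@[fun_prop]
theorem DefPred.ltM (hf : A.DefinableFun arith f) (hg : A.DefinableFun arith g) :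
    DefPred A fun v => ltM (f v) (g v) := by
  have h : DefPred A fun v : Fin 2 → M => Arith.ltM (v 0) (v 1) := by
    refine Set.Definable.mono (A := ∅) (Set.empty_definable_iff.2
      ⟨Relations.formula₂ (L := arith) arithRel.lt (.var 0) (.var 1), ?_⟩) (Set.empty_subset _)
    ext v
    exact (Formula.realize_rel₂ (L := arith) (M := M) (R := arithRel.lt) (t₁ := .var 0)
      (t₂ := .var 1)).symm
  exact h.subst (F := ![f, g]) (by simp [Fin.forall_fin_two, hf, hg])

@[fun_prop]
theorem definableFun_addM (hf : A.DefinableFun arith f) (hg : A.DefinableFun arith g) :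
    A.DefinableFun arith fun v => addM (f v) (g v) := by
  have h := (Set.DefinableFun.fun_symbol (M := M) (L := arith) arithFunc.add).of_empty (A := A)
  have := Set.DefinableFun.comp (g := fun v => ![f v, g v])
    (by simp [Set.DefinableMap, Fin.forall_fin_two, hf, hg]) h
  exact this

@[fun_prop]
theorem definableFun_mulM (hf : A.DefinableFun arith f) (hg : A.DefinableFun arith g) :
    A.DefinableFun arith fun v => mulM (f v) (g v) := by
  have h := (Set.DefinableFun.fun_symbol (M := M) (L := arith) arithFunc.mul).of_empty (A := A)
  have := Set.DefinableFun.comp (g := fun v => ![f v, g v])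
    (by simp [Set.DefinableMap, Fin.forall_fin_two, hf, hg]) h
  exact this

@[fun_prop]
theorem definableFun_const_univ (a : M) :
    (Set.univ : Set M).DefinableFun arith fun _ : α → M => a :=
  definableFun_const arith α (Set.mem_univ a)

end Definability

/-- Type class version of `IsPAModel`. -/
class PAModel (M : Type*) [arith.Structure M] : Prop where
  isPAModel : IsPAModel M

namespace PAModel

variable {M : Type*} [arith.Structure M] [PAModel M] {α : Type*} {A : Set M} {f g : (α → M) → M}

instance (M : Type*) [arith.Structure M] [PAModel M] : Zero M := ⟨zeroM M⟩
instance (M : Type*) [arith.Structure M] [PAModel M] : One M := ⟨oneM M⟩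
instance (M : Type*) [arith.Structure M] [PAModel M] : Add M := ⟨addM⟩
instance (M : Type*) [arith.Structure M] [PAModel M] : Mul M := ⟨mulM⟩
instance (M : Type*) [arith.Structure M] [PAModel M] : LT M := ⟨ltM⟩

@[fun_prop]
theorem definableFun_add (hf : A.DefinableFun arith f) (hg : A.DefinableFun arith g) :
    A.DefinableFun arith fun v => f v + g v :=
  definableFun_addM hf hg

@[fun_prop]
theorem definableFun_mul (hf : A.DefinableFun arith f) (hg : A.DefinableFun arith g) :
    A.DefinableFun arith fun v => f v * g v :=
  definableFun_mulM hf hg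

@[fun_prop]
theorem defPred_lt (hf : A.DefinableFun arith f) (hg : A.DefinableFun arith g) :
    DefPred A fun v => f v < g v :=
  DefPred.ltM hf hg

theorem add_zero' (x : M) : x + 0 = x := isPAModel.1 x
theorem add_succ' (x y : M) : x + (y + 1) = x + y + 1 := isPAModel.2.1 x y
theorem mul_zero' (x : M) : x * 0 = 0 := isPAModel.2.2.1 x
theorem mul_succ' (x y : M) : x * (y + 1) = x * y + x := isPAModel.2.2.2.1 x y
theorem not_lt_zero' (x : M) : ¬ x < 0 := isPAModel.2.2.2.2.1 x
theorem lt_succ' {x y : M} : x < y + 1 ↔ x < y ∨ x = y := isPAModel.2.2.2.2.2.1 x y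
theorem succ_ne_zero' (x : M) : x + 1 ≠ 0 := isPAModel.2.2.2.2.2.2.1 x
theorem succ_inj' {x y : M} : x + 1 = y + 1 → x = y := isPAModel.2.2.2.2.2.2.2.1 x y

/-- Induction for definable predicates. -/
theorem induct {P : M → Prop} (hP : DefPred Set.univ fun v : Fin 1 → M => P (v 0))
    (zero : P 0) (succ : ∀ x, P x → P (x + 1)) (x : M) : P x :=
  isPAModel.2.2.2.2.2.2.2.2 {x | P x} hP zero succ x

theorem zero_add' (x : M) : 0 + x = x := by
  refine induct (P := fun x : M => 0 + x = x) (by fun_prop) (add_zero' 0) (fun x hx => ?_) x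
  rw [add_succ', hx]

theorem succ_add' (x y : M) : x + 1 + y = x + y + 1 := by
  refine induct (P := fun y : M => x + 1 + y = x + y + 1)
    (by fun_prop) (by simp [add_zero']) (fun y hy => ?_) y
  rw [add_succ', hy, add_succ']

theorem add_comm' (x y : M) : x + y = y + x := by
  refine induct (P := fun y : M => x + y = y + x)
    (by fun_prop) (by simp [add_zero', zero_add']) (fun y hy => ?_) y
  rw [add_succ', hy, succ_add']

theorem add_assoc' (x y z : M) : x + y + z = x + (y + z) := by
  refine induct (P := fun z : M => x + y + z = x + (y + z))
    (by fun_prop) (by simp [add_zero']) (fun z hz => ?_) z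
  rw [add_succ', hz, add_succ', add_succ']

instance : AddCommMonoid M where
  add_assoc := add_assoc'
  zero_add := zero_add'
  add_zero := add_zero'
  add_comm := add_comm'
  nsmul := nsmulRec

theorem zero_mul' (x : M) : 0 * x = 0 := by
  refine induct (P := fun x : M => 0 * x = 0) (by fun_prop) (mul_zero' 0) (fun x hx => ?_) x
  rw [mul_succ', hx, add_zero]

theorem succ_mul' (x y : M) : (x + 1) * y = x * y + y := by
  refine induct (P := fun y : M => (x + 1) * y = x * y + y)
    (by fun_prop) (by simp [mul_zero']) (fun y hy => ?_) y
  rw [mul_succ', hy, mul_succ']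
  ac_rfl

theorem mul_comm' (x y : M) : x * y = y * x := by
  refine induct (P := fun y : M => x * y = y * x)
    (by fun_prop) (by simp [mul_zero', zero_mul']) (fun y hy => ?_) y
  rw [mul_succ', hy, succ_mul']

theorem mul_add' (x y z : M) : x * (y + z) = x * y + x * z := by
  refine induct (P := fun z : M => x * (y + z) = x * y + x * z)
    (by fun_prop) (by simp [mul_zero']) (fun z hz => ?_) z
  rw [← add_assoc, mul_succ', hz, mul_succ', add_assoc]

theorem mul_assoc' (x y z : M) : x * y * z = x * (y * z) := by
  refine induct (P := fun z : M => x * y * z = x * (y * z))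
    (by fun_prop) (by simp [mul_zero']) (fun z hz => ?_) z
  rw [mul_succ', hz, mul_succ', mul_add']

theorem mul_one' (x : M) : x * 1 = x := by
  rw [← zero_add (1 : M), mul_succ', mul_zero', zero_add]

instance : CommSemiring M where
  mul_assoc := mul_assoc'
  one_mul x := by rw [mul_comm', mul_one']
  mul_one := mul_one'
  zero_mul := zero_mul'
  mul_zero := mul_zero'
  left_distrib := mul_add'
  right_distrib x y z := by rw [mul_comm', mul_add', mul_comm' z, mul_comm' z]
  mul_comm := mul_comm'
  npow := npowRec
  natCast n := Nat.unaryCast n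

theorem eq_zero_or_succ (x : M) : x = 0 ∨ ∃ y, x = y + 1 :=
  induct (P := fun x : M => x = 0 ∨ ∃ y, x = y + 1) (by fun_prop) (.inl rfl)
    (fun x _ => .inr ⟨x, rfl⟩) x

theorem add_right_cancel' (x y z : M) : x + z = y + z → x = y := by
  refine induct (P := fun z : M => x + z = y + z → x = y) (by fun_prop) (by simp)
    (fun z hz h => hz (succ_inj' ?_)) z
  rwa [add_assoc, add_assoc]

instance : IsCancelAdd M :=
  haveI : IsRightCancelAdd M := ⟨fun z x y h => add_right_cancel' x y z h⟩
  AddCommMagma.IsRightCancelAdd.toIsCancelAdd M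

theorem lt_iff_exists {x y : M} : x < y ↔ ∃ z, x + (z + 1) = y := by
  refine induct (P := fun y : M => ∀ x, x < y ↔ ∃ z, x + (z + 1) = y) (by fun_prop) ?_ ?_ y x
  · intro x
    simp only [not_lt_zero', ← add_assoc, succ_ne_zero', exists_false]
  · intro y hy x
    rw [lt_succ', hy]
    constructor
    · rintro (⟨z, rfl⟩ | rfl)
      · exact ⟨z + 1, by rw [← add_assoc]⟩
      · exact ⟨0, by rw [zero_add]⟩
    · rintro ⟨z, hz⟩
      rw [← add_assoc] at hz
      have := succ_inj' hz
      obtain rfl | ⟨w, rfl⟩ := eq_zero_or_succ z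
      · exact .inr (by simpa using this)
      · exact .inl ⟨w, this⟩

theorem trichotomy (x y : M) : x < y ∨ x = y ∨ y < x := by
  refine induct (P := fun x : M => x < y ∨ x = y ∨ y < x) (by fun_prop) ?_ ?_ x
  · obtain rfl | ⟨w, rfl⟩ := eq_zero_or_succ y
    · simp
    · exact .inl (lt_iff_exists.2 ⟨w, zero_add _⟩)
  · rintro x (h | rfl | h)
    · obtain ⟨z, rfl⟩ := lt_iff_exists.1 h
      obtain rfl | ⟨w, rfl⟩ := eq_zero_or_succ z
      · simp
      · exact .inl (lt_iff_exists.2 ⟨w, by ring⟩)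
    · exact .inr (.inr (lt_succ'.2 (.inr rfl)))
    · exact .inr (.inr (lt_succ'.2 (.inl h)))

instance (M : Type*) [arith.Structure M] [PAModel M] : LE M := ⟨fun x y => ∃ z, x + z = y⟩

theorem add_eq_zero_imp {x y : M} (h : x + y = 0) : y = 0 := by
  obtain rfl | ⟨w, rfl⟩ := eq_zero_or_succ y
  · rfl
  · rw [← add_assoc] at h
    exact absurd h (succ_ne_zero' _)

noncomputable instance : LinearOrder M where
  le_refl x := ⟨0, add_zero x⟩
  le_trans := by
    rintro x _ _ ⟨a, rfl⟩ ⟨b, rfl⟩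
    exact ⟨a + b, by rw [add_assoc]⟩
  le_antisymm := by
    rintro x y ⟨a, rfl⟩ ⟨b, hb⟩
    have : a + b = 0 := by simpa [add_assoc] using hb
    rw [add_comm] at this
    rw [add_eq_zero_imp this, add_zero]
  le_total x y := by
    rcases trichotomy x y with h | rfl | h
    · obtain ⟨z, hz⟩ := lt_iff_exists.1 h
      exact .inl ⟨_, hz⟩
    · exact .inl ⟨0, add_zero x⟩
    · obtain ⟨z, hz⟩ := lt_iff_exists.1 h
      exact .inr ⟨_, hz⟩
  lt_iff_le_not_ge x y := by
    constructor
    · intro h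
      obtain ⟨z, rfl⟩ := lt_iff_exists.1 h
      refine ⟨⟨_, rfl⟩, ?_⟩
      rintro ⟨w, hw⟩
      have : w + z + 1 = 0 := by
        have : x + (w + z + 1) = x := by rw [← hw]; nth_rw 2 [← hw]; ring
        simpa using this
      exact succ_ne_zero' _ this
    · rintro ⟨⟨z, rfl⟩, h⟩
      obtain rfl | ⟨w, rfl⟩ := eq_zero_or_succ z
      · exact absurd ⟨0, by simp⟩ h
      · exact lt_iff_exists.2 ⟨w, rfl⟩
  toDecidableLE := Classical.decRel _

instance : CanonicallyOrderedAdd M where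
  exists_add_of_le := by
    rintro x y ⟨z, hz⟩
    exact ⟨z, hz.symm⟩
  le_add_self x y := ⟨y, add_comm _ _⟩
  le_self_add x y := ⟨y, rfl⟩

instance : Nontrivial M := ⟨0, 1, fun h => succ_ne_zero' (0 : M) (by rw [zero_add, ← h])⟩

instance : IsOrderedAddMonoid M where
  add_le_add_left := by
    rintro x _ ⟨z, rfl⟩ y
    exact ⟨z, by ring⟩

instance : IsStrictOrderedRing M :=
  { (inferInstance : IsOrderedAddMonoid M), (inferInstance : Nontrivial M) with
    le_of_add_le_add_left := by
      rintro x y z ⟨w, hw⟩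
      exact ⟨w, by rw [add_assoc] at hw; exact add_left_cancel hw⟩
    zero_le_one := zero_le
    mul_lt_mul_of_pos_left := by
      intro x hx y z hyz
      obtain ⟨w, rfl⟩ := lt_iff_exists.1 hx
      obtain ⟨u, rfl⟩ := lt_iff_exists.1 hyz
      exact lt_iff_exists.2 ⟨w * u + w + u, by ring⟩
    mul_lt_mul_of_pos_right := by
      intro x hx y z hyz
      obtain ⟨w, rfl⟩ := lt_iff_exists.1 hx
      obtain ⟨u, rfl⟩ := lt_iff_exists.1 hyz
      exact lt_iff_exists.2 ⟨w * u + w + u, by ring⟩ }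

theorem lt_add_one_iff' {x y : M} : x < y + 1 ↔ x ≤ y := by
  rw [lt_succ', le_iff_lt_or_eq]

@[fun_prop]
theorem defPred_le (hf : A.DefinableFun arith f) (hg : A.DefinableFun arith g) :
    DefPred A fun v => f v ≤ g v := by
  simp only [le_iff_lt_or_eq]
  fun_prop

theorem numeral_eq (n : ℕ) : numeral M n = (n : M) := by
  induction n with
  | zero => rfl
  | succ n ih => rw [numeral, ih, Nat.cast_succ]; rfl

end PAModel

end Arith

namespace Arith
namespace PAModel

section

variable {M : Type*} [arith.Structure M] [PAModel M] {α : Type*} {f g : (α → M) → M}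

theorem isStd_iff {x : M} : IsStd x ↔ ∃ n : ℕ, x = n := by
  simp only [IsStd, numeral_eq]

theorem exists_natCast_of_lt {x : M} {n : ℕ} (h : x < n) : ∃ m < n, x = m := by
  induction n with
  | zero => simp at h
  | succ n ih =>
    rw [Nat.cast_succ, lt_succ'] at h
    rcases h with h | rfl
    · obtain ⟨m, hm, rfl⟩ := ih h
      exact ⟨m, hm.trans n.lt_succ_self, rfl⟩
    · exact ⟨n, n.lt_succ_self, rfl⟩

theorem exists_natCast_of_le {x : M} {n : ℕ} (h : x ≤ n) : ∃ m ≤ n, x = m := by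
  obtain ⟨m, hm, rfl⟩ := exists_natCast_of_lt (x := x) (n := n + 1)
    (by rw [Nat.cast_succ]; exact lt_add_one_iff'.2 h)
  exact ⟨m, by omega, rfl⟩

theorem natCast_lt_of_not_isStd {x : M} (h : ¬ IsStd x) (n : ℕ) : (n : M) < x := by
  by_contra h'
  obtain ⟨m, -, rfl⟩ := exists_natCast_of_le (not_lt.1 h')
  exact h (isStd_iff.2 ⟨m, rfl⟩)

theorem not_isStd_of_forall_le {x : M} (h : ∀ n : ℕ, (n : M) ≤ x) : ¬ IsStd x := by
  intro hx
  obtain ⟨m, rfl⟩ := isStd_iff.1 hx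
  exact absurd (Nat.cast_le.1 (h (m + 1))) (by omega)

/-- Definable sets containing all numerals contain a non-standard element. -/
theorem overspill {P : M → Prop} (hM : ∃ x : M, ¬ IsStd x)
    (hP : DefPred Set.univ fun v : Fin 1 → M => P (v 0)) (h : ∀ n : ℕ, P n) :
    ∃ x : M, ¬ IsStd x ∧ P x := by
  obtain ⟨c, hc⟩ := hM
  by_contra! H
  have key : ∀ x : M, IsStd x := by
    have hstd : ∀ x : M, (∀ y ≤ x, P y) ↔ IsStd x := by
      refine fun x => ⟨fun hx => ?_, fun hx y hy => ?_⟩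
      · by_contra hx'
        exact H x hx' (hx x le_rfl)
      · obtain ⟨n, rfl⟩ := isStd_iff.1 hx
        obtain ⟨m, -, rfl⟩ := exists_natCast_of_le hy
        exact h m
    refine fun x => (hstd x).1 ?_
    refine induct (P := fun x : M => ∀ y ≤ x, P y) ?_ ?_ ?_ x
    · refine DefPred.forall (DefPred.imp (by fun_prop) ?_)
      exact hP.comp fun _ => none
    · exact (hstd 0).2 (isStd_iff.2 ⟨0, by simp⟩)
    · intro x hx
      obtain ⟨n, rfl⟩ := isStd_iff.1 ((hstd x).1 hx)
      exact (hstd _).2 (isStd_iff.2 ⟨n + 1, by simp⟩)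
  exact hc (key c)

/-- The least number principle. -/
theorem exists_least {P : M → Prop} (hP : DefPred Set.univ fun v : Fin 1 → M => P (v 0))
    (h : ∃ x, P x) : ∃ x, P x ∧ ∀ y, P y → x ≤ y := by
  by_contra! H
  obtain ⟨x, hx⟩ := h
  have : ∀ x : M, ∀ y, y ≤ x → ¬ P y := by
    refine induct (P := fun x : M => ∀ y, y ≤ x → ¬ P y) ?_ ?_ ?_
    · refine DefPred.forall (DefPred.imp (by fun_prop) (DefPred.not ?_))
      exact hP.comp fun _ => none
    · intro y hy hPy
      obtain ⟨z, -, hz⟩ := H y hPy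
      exact absurd (hz.trans_le hy) (not_lt_zero' z)
    · intro x ih y hy hPy
      obtain ⟨z, hPz, hz⟩ := H y hPy
      exact ih z (lt_add_one_iff'.1 (hz.trans_le hy)) hPz
  exact this x x le_rfl hx

/-- The binary digit of `x` at the power of two `p`. -/
def Dig (x p : M) : Prop := ∃ u v, x = u * (p + p) + (p + v) ∧ v < p

@[fun_prop]
theorem defPred_dig (hf : Set.univ.DefinableFun arith f) (hg : Set.univ.DefinableFun arith g) :
    DefPred Set.univ fun v => Dig (f v) (g v) := by
  have h : DefPred Set.univ fun v : Fin 2 → M => Dig (v 0) (v 1) := by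
    unfold Dig
    fun_prop
  exact h.subst (F := ![f, g]) (by simp [Fin.forall_fin_two, hf, hg])

theorem digitB_iff (x : M) (i : ℕ) : digitB x i ↔ Dig x ((2 ^ i : ℕ) : M) := by
  unfold digitB Dig
  simp only [numeral_eq, pow_succ, mul_two, Nat.cast_add]
  rfl

theorem dig_natCast (n i : ℕ) : Dig (n : M) ((2 ^ i : ℕ) : M) ↔ n.testBit i := by
  constructor
  · rintro ⟨u, v, h, hv⟩
    obtain ⟨v, hv', rfl⟩ := exists_natCast_of_lt hv
    have hu : u ≤ n := by
      rw [h]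
      refine le_trans ?_ le_self_add
      refine le_mul_of_one_le_right zero_le ?_
      have : 1 ≤ 2 ^ i + 2 ^ i := le_add_right Nat.one_le_two_pow
      exact_mod_cast this
    obtain ⟨u, -, rfl⟩ := exists_natCast_of_le hu
    have h' : n = u * (2 ^ i + 2 ^ i) + (2 ^ i + v) := by exact_mod_cast h
    rw [Nat.testBit_eq_decide_div_mod_eq, decide_eq_true_iff, h',
      show u * (2 ^ i + 2 ^ i) + (2 ^ i + v) = v + 2 ^ i * (2 * u + 1) by ring,
      Nat.add_mul_div_left _ _ (by positivity), Nat.div_eq_of_lt hv']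
    omega
  · intro h
    rw [Nat.testBit_eq_decide_div_mod_eq, decide_eq_true_iff] at h
    refine ⟨(n / 2 ^ i / 2 : ℕ), (n % 2 ^ i : ℕ), ?_, ?_⟩
    · have h1 := Nat.div_add_mod n (2 ^ i)
      have h2 := Nat.div_add_mod (n / 2 ^ i) 2
      rw [h] at h2
      have : n = n / 2 ^ i / 2 * (2 ^ i + 2 ^ i) + (2 ^ i + n % 2 ^ i) := by
        conv_lhs => rw [← h1, ← h2]
        ring
      exact_mod_cast this
    · exact_mod_cast Nat.mod_lt _ (by positivity)

/-- A definable predicate holding of a numeral iff it is a power of two. -/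
def Pow2 (q : M) : Prop := ∀ d e, q = d * e → d = 1 ∨ ∃ c, d = c + c

@[fun_prop]
theorem defPred_pow2 (hf : Set.univ.DefinableFun arith f) :
    DefPred Set.univ fun v => Pow2 (f v) := by
  have h : DefPred Set.univ fun v : Fin 1 → M => Pow2 (v 0) := by
    unfold Pow2
    fun_prop
  exact h.subst (F := ![f]) (by simp [hf])

theorem pow2_natCast {n : ℕ} : Pow2 (n : M) ↔ ∃ i, n = 2 ^ i := by
  have even_natCast : ∀ d : ℕ, (∃ c : M, (d : M) = c + c) ↔ Even d := by
    refine fun d => ⟨?_, ?_⟩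
    · rintro ⟨c, hc⟩
      obtain ⟨c, -, rfl⟩ := exists_natCast_of_le (x := c) (n := d) (by rw [hc]; exact le_self_add)
      exact ⟨c, by exact_mod_cast hc⟩
    · rintro ⟨c, rfl⟩
      exact ⟨c, by simp⟩
  constructor
  · intro h
    rcases n.eq_two_pow_or_exists_odd_prime_and_dvd with ⟨k, hk⟩ | ⟨p, hp, ⟨e, he⟩, hodd⟩
    · exact ⟨k, hk⟩
    · exfalso
      rcases h p e (by exact_mod_cast he) with h1 | h1
      · exact hp.one_lt.ne' (by exact_mod_cast h1)
      · exact (Nat.not_even_iff_odd.2 hodd) ((even_natCast p).1 h1)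
  · rintro ⟨i, rfl⟩ d e hde
    have he0 : e ≠ 0 := by
      rintro rfl
      rw [mul_zero] at hde
      exact absurd hde (by exact_mod_cast (by positivity : (2 ^ i : ℕ) ≠ 0))
    have hd0 : d ≠ 0 := by
      rintro rfl
      rw [zero_mul] at hde
      exact absurd hde (by exact_mod_cast (by positivity : (2 ^ i : ℕ) ≠ 0))
    have one_le : ∀ x : M, x ≠ 0 → 1 ≤ x := by
      intro x hx
      obtain rfl | ⟨y, rfl⟩ := eq_zero_or_succ x
      · exact absurd rfl hx
      · exact le_add_self
    obtain ⟨d, -, rfl⟩ := exists_natCast_of_le (x := d) (n := 2 ^ i)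
      (by rw [hde]; exact le_mul_of_one_le_right zero_le (one_le e he0))
    obtain ⟨e, -, rfl⟩ := exists_natCast_of_le (x := e) (n := 2 ^ i)
      (by rw [hde]; exact le_mul_of_one_le_left zero_le (one_le _ hd0))
    have hde' : 2 ^ i = d * e := by exact_mod_cast hde
    obtain ⟨j, -, rfl⟩ := (Nat.dvd_prime_pow Nat.prime_two).1 ⟨e, hde'⟩
    rcases j with _ | j
    · simp
    · exact .inr ((even_natCast _).2 ⟨2 ^ j, by ring⟩)

theorem exists_nat_testBit (p : ℕ → Prop) (n : ℕ) :
    ∃ x : ℕ, ∀ i < n, x.testBit i ↔ p i := by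
  classical
  refine ⟨Nat.ofBits fun i : Fin n => decide (p i), fun i hi => ?_⟩
  rw [Nat.testBit_ofBits_lt _ _ hi]
  simp

/-- The traces on the standard powers of two of definable sets are in the standard system. -/
theorem mem_SSy_of_defPred {P : M → Prop} (hM : ∃ x : M, ¬ IsStd x)
    (hP : DefPred Set.univ fun v : Fin 1 → M => P (v 0)) :
    {i : ℕ | P ((2 ^ i : ℕ) : M)} ∈ SSy M := by
  have hdef : DefPred Set.univ fun v : Fin 1 → M =>
      ∃ x ≥ v 0, ∀ p ≤ v 0, Pow2 p → (Dig x p ↔ P p) := by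
    refine DefPred.exists (DefPred.and (by fun_prop) (DefPred.forall (DefPred.imp (by fun_prop)
      (DefPred.imp (by fun_prop) (DefPred.iff (by fun_prop) ?_)))))
    exact hP.comp fun _ => none
  obtain ⟨b, hb, x, hx, H⟩ := overspill
    (P := fun b : M => ∃ x ≥ b, ∀ p ≤ b, Pow2 p → (Dig x p ↔ P p)) hM hdef fun n => by
    obtain ⟨x, hx⟩ := exists_nat_testBit (fun i => P ((2 ^ i : ℕ) : M) ∨ i = n + 1) (n + 2)
    have hnx : n ≤ x :=
      (Nat.lt_two_pow_self.trans (Nat.pow_lt_pow_right one_lt_two n.lt_succ_self)).le.trans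
        (Nat.ge_two_pow_of_testBit ((hx (n + 1) (by omega)).2 (.inr rfl)))
    refine ⟨x, by exact_mod_cast hnx, fun p hp hp2 => ?_⟩
    obtain ⟨p, hpn, rfl⟩ := exists_natCast_of_le hp
    obtain ⟨i, rfl⟩ := pow2_natCast.1 hp2
    have hi : i < n + 1 := Nat.lt_succ_of_le (Nat.lt_two_pow_self.le.trans hpn)
    rw [dig_natCast, hx i (by omega)]
    exact or_iff_left hi.ne
  refine ⟨x, not_isStd_of_forall_le fun n => (natCast_lt_of_not_isStd hb n).le.trans hx,
    fun i => ?_⟩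
  rw [digitB_iff, H _ (natCast_lt_of_not_isStd hb _).le (pow2_natCast.2 ⟨i, rfl⟩)]
  rfl

/-- The `β` predicate of Gödel: `y` is the remainder of `a` modulo `1 + (j + 1) m`. -/
def Beta (a m j y : M) : Prop := ∃ u, a = u * (1 + (j + 1) * m) + y ∧ y < 1 + (j + 1) * m

theorem Beta.unique {a m j y y' : M} (h : Beta a m j y) (h' : Beta a m j y') : y = y' := by
  have key : ∀ {u u' c y y' : M}, u ≤ u' → y < c → u * c + y = u' * c + y' → y = y' := by
    rintro u _ c y y' ⟨w, rfl⟩ hy h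
    rw [add_mul, add_assoc] at h
    have h := add_left_cancel h
    obtain rfl | ⟨w, rfl⟩ := eq_zero_or_succ w
    · simpa using h
    · refine absurd hy (not_lt.2 ?_)
      rw [h, add_mul, one_mul, add_right_comm]
      exact le_add_self
  obtain ⟨u, hu, hy⟩ := h
  obtain ⟨u', hu', hy'⟩ := h'
  rcases le_total u u' with h | h
  · exact key h hy (hu ▸ hu')
  · exact (key h hy' (hu ▸ hu').symm).symm

theorem exists_beta {m : M} {k : ℕ} (hm : ∀ d : ℕ, 0 < d → d < k → ∃ q, m = d * q)
    (f : ℕ → M) (hf : ∀ j < k, f j ≤ m) :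
    ∃ a, ∀ j : ℕ, j < k → ∀ y, Beta a m j y ↔ y = f j := by
  suffices h : ∃ a, ∀ j : ℕ, j < k → ∃ u, a = u * (1 + (j + 1) * m) + f j by
    obtain ⟨a, ha⟩ := h
    have hb : ∀ j : ℕ, j < k → Beta a m j (f j) := by
      intro j hj
      obtain ⟨u, hu⟩ := ha j hj
      refine ⟨u, hu, (hf j hj).trans_lt ?_⟩
      rw [add_comm, lt_add_one_iff', add_mul, one_mul]
      exact le_add_self
    refine ⟨a, fun j hj y => ⟨fun h => h.unique (hb j hj), ?_⟩⟩
    rintro rfl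
    exact hb j hj
  suffices h : ∀ k' ≤ k, ∃ a, ∀ j : ℕ, j < k' → ∃ u, a = u * (1 + (j + 1) * m) + f j from
    h k le_rfl
  intro k' hk'
  induction k' with
  | zero => simp
  | succ l ih =>
    obtain ⟨a, ha⟩ := ih (by omega)
    have coprime : ∀ l' ≤ l, ∃ u v : M,
        u * ∏ j ∈ Finset.range l', (1 + ((j : M) + 1) * m) = v * (1 + ((l : M) + 1) * m) + 1 := by
      intro l' hl'
      induction l' with
      | zero => exact ⟨1, 0, by simp⟩
      | succ j ih =>
        obtain ⟨u, v, huv⟩ := ih (by omega)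
        obtain ⟨d, rfl⟩ := Nat.exists_eq_add_of_lt (show j < l by omega)
        obtain ⟨q, hq⟩ := hm (d + 1) (by omega) (by omega)
        have hj : (1 + ((j : M) + 1) * (((j + d + 1 : ℕ) : M) + 1) * q *
              (((j + d + 1 : ℕ) : M) + 1) * m) * (1 + ((j : M) + 1) * m) =
            ((j : M) + 1) * q * ((d + 1 : ℕ) + (((j + d + 1 : ℕ) : M) + 1) * ((j : M) + 1) * m) *
              (1 + (((j + d + 1 : ℕ) : M) + 1) * m) + 1 := by
          rw [hq]
          push_cast
          ring
        generalize (1 + ((j : M) + 1) * (((j + d + 1 : ℕ) : M) + 1) * q *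
          (((j + d + 1 : ℕ) : M) + 1) * m) = u' at hj
        generalize ((j : M) + 1) * q *
          ((d + 1 : ℕ) + (((j + d + 1 : ℕ) : M) + 1) * ((j : M) + 1) * m) = v' at hj
        rw [Finset.prod_range_succ]
        refine ⟨u * u', v * v' * (1 + (((j + d + 1 : ℕ) : M) + 1) * m) + v + v', ?_⟩
        rw [mul_mul_mul_comm, huv, hj]
        ring
    obtain ⟨u, v, huv⟩ := coprime l le_rfl
    set e := ∏ j ∈ Finset.range l, (1 + ((j : M) + 1) * m) with he
    refine ⟨a + e * (u * (f l + a * ((l + 1) * m))), fun j hj => ?_⟩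
    rcases Nat.lt_succ_iff_lt_or_eq.1 hj with hj | rfl
    · obtain ⟨w, hw⟩ := ha j hj
      obtain ⟨c, hc⟩ := Finset.dvd_prod_of_mem (fun j : ℕ => 1 + ((j : M) + 1) * m)
        (Finset.mem_range.2 hj)
      refine ⟨w + c * (u * (f l + a * ((l + 1) * m))), ?_⟩
      rw [he, hc]
      conv_lhs => enter [1]; rw [hw]
      ring
    · refine ⟨a + v * (f j + a * ((j + 1) * m)), ?_⟩
      rw [← mul_assoc, mul_comm e, huv]
      ring

theorem exists_beta_family {S : Type*} [Finite S] (f : S → ℕ → M) (k : ℕ) :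
    ∃ (m : M) (a : S → M), ∀ s, ∀ j < k, ∀ y, Beta (a s) m j y ↔ y = f s j := by
  have := Fintype.ofFinite S
  have h := fun s => exists_beta (m := (k.factorial : M) * ∑ s, ∑ j ∈ Finset.range k, f s j)
    (k := k) (fun d hd hdk => by
      obtain ⟨c, hc⟩ := Nat.dvd_factorial hd hdk.le
      exact ⟨c * ∑ s, ∑ j ∈ Finset.range k, f s j, by rw [hc]; push_cast; ring⟩) (f s)
    (fun j hj => by
      have h1 : f s j ≤ ∑ s, ∑ j ∈ Finset.range k, f s j :=
        (Finset.single_le_sum (f := f s) (fun _ _ => zero_le) (Finset.mem_range.2 hj)).trans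
          (Finset.single_le_sum (f := fun s => ∑ j ∈ Finset.range k, f s j)
            (fun _ _ => zero_le) (Finset.mem_univ s))
      refine h1.trans (le_mul_of_one_le_left zero_le ?_)
      exact_mod_cast Nat.one_le_iff_ne_zero.2 k.factorial_ne_zero)
  choose a ha using h
  exact ⟨_, a, ha⟩

theorem exists_not_isStd (h : NonstandardModel M) : ∃ x : M, ¬ IsStd x := by
  by_contra! H
  let c : ℕ ≃ M := Equiv.ofBijective (Nat.cast : ℕ → M) ⟨Nat.cast_injective, fun x => by
    obtain ⟨n, hn⟩ := isStd_iff.1 (H x)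
    exact ⟨n, hn.symm⟩⟩
  have tuple : ∀ v : Fin 2 → ℕ, c ∘ v = ![((v 0 : ℕ) : M), ((v 1 : ℕ) : M)] := by
    intro v
    ext i
    fin_cases i <;> rfl
  refine h.2 ⟨FirstOrder.Language.Equiv.symm (L := arith) ⟨c, fun {n} f v => ?_, fun {n} r v => ?_⟩⟩
  · match n, f, v with
    | _, .zero, v =>
      exact (Nat.cast_zero (R := M)).trans
        (congrArg (Structure.funMap (L := arith) arithFunc.zero) (Subsingleton.elim _ _))
    | _, .one, v =>
      exact (Nat.cast_one (R := M)).trans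
        (congrArg (Structure.funMap (L := arith) arithFunc.one) (Subsingleton.elim _ _))
    | _, .add, v =>
      exact (Nat.cast_add (R := M) (v 0) (v 1)).trans
        (congrArg (Structure.funMap (L := arith) arithFunc.add) (tuple v).symm)
    | _, .mul, v =>
      exact (Nat.cast_mul (α := M) (v 0) (v 1)).trans
        (congrArg (Structure.funMap (L := arith) arithFunc.mul) (tuple v).symm)
  · match n, r, v with
    | _, .lt, v =>
      exact (iff_of_eq (congrArg (Structure.RelMap (L := arith) arithRel.lt) (tuple v))).trans
        (Nat.cast_lt (α := M) (m := v 0) (n := v 1))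

end

end PAModel
end Arith

namespace Arith

section Counting

variable {ι R S : Type*}

theorem sum_sum_update [Fintype ι] [DecidableEq ι] [Fintype R] (h : (ι → R) → ℕ) (i : ι) :
    ∑ v, ∑ x, h (Function.update v i x) = Fintype.card R * ∑ v, h v := by
  have hinv : Function.Involutive
      fun p : (ι → R) × R => (Function.update p.1 i p.2, p.1 i) := by
    rintro ⟨v, x⟩
    simp
  have := Equiv.sum_comp hinv.toPerm fun p : (ι → R) × R => h p.1
  rw [Fintype.sum_prod_type, Fintype.sum_prod_type] at this
  simpa [Finset.mul_sum] using this

/-- A Cauchy–Schwarz estimate: a set not depending on the coordinate `j` meets its image under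
the exchange of the coordinates `i` and `j` in at least the expected proportion. -/
theorem sq_ncard_le_of_indep [Finite ι] [DecidableEq ι] [Finite R] [Nonempty R]
    {Q : Set (ι → R)} {i j : ι} (hij : i ≠ j)
    (hQ : ∀ v x, Function.update v j x ∈ Q ↔ v ∈ Q) :
    Q.ncard ^ 2 ≤ Nat.card (ι → R) * {v | v ∈ Q ∧ v ∘ Equiv.swap i j ∈ Q}.ncard := by
  classical
  have := Fintype.ofFinite ι
  have := Fintype.ofFinite R
  have ncard_eq : ∀ P : Set (ι → R), P.ncard = ∑ v, if v ∈ P then 1 else 0 := by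
    intro P
    rw [Set.ncard_eq_toFinset_card', ← Finset.card_filter]
    congr 1
    ext
    simp
  let q : (ι → R) → ℕ := fun v => if v ∈ Q then 1 else 0
  let q' : (ι → R) → ℕ := fun v => if v ∈ Q ∧ v ∘ Equiv.swap i j ∈ Q then 1 else 0
  have key : ∀ v x y, q (Function.update v i x) * q (Function.update v i y) =
      q' (Function.update (Function.update v i x) j y) := by
    intro v x y
    have h1 : (Function.update (Function.update v i x) j y) ∘ Equiv.swap i j =
        Function.update (Function.update v i y) j x := by
      ext k
      by_cases hk : k = i
      · subst hk
        simp [hij]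
      · by_cases hk' : k = j
        · subst hk'
          simp [hij]
        · simp [Equiv.swap_apply_of_ne_of_ne hk hk', hk, hk']
    simp only [q, q', h1, hQ]
    split_ifs <;> simp_all
  have h1 := sum_sum_update q i
  have h2 : ∑ v, (∑ x, q (Function.update v i x)) ^ 2 =
      Fintype.card R * (Fintype.card R * ∑ v, q' v) := by
    simp only [sq, Finset.sum_mul_sum, key]
    rw [sum_sum_update fun w => ∑ y, q' (Function.update w j y), sum_sum_update]
  have h3 := sq_sum_le_card_mul_sum_sq (s := (Finset.univ : Finset (ι → R)))
    (f := fun v => ∑ x, q (Function.update v i x))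
  rw [h1, h2, Finset.card_univ] at h3
  have hR : 0 < Fintype.card R ^ 2 := pow_pos Fintype.card_pos 2
  rw [Nat.card_eq_fintype_card, ncard_eq, ncard_eq]
  refine Nat.le_of_mul_le_mul_left ?_ hR
  calc _ = (Fintype.card R * ∑ v, q v) ^ 2 := by rw [mul_pow]
    _ ≤ _ := h3
    _ = _ := by simp only [q', Set.mem_ofPred_eq, Nat.cast_id]; ring_nf

/-- If `P` has density at least `1 / K`, the set of those pairs of tuples all of whose mixtures
are in `P` has density at least `1 / K ^ (2 ^ n)`. -/
theorem card_le_mul_ncard_double [Finite S] [Finite R] [Nonempty R] {P : Set (S → R)} {K : ℕ}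
    (hP : Nat.card (S → R) ≤ K * P.ncard) :
    Nat.card (S × Bool → R) ≤ K ^ 2 ^ Nat.card S *
      {v : S × Bool → R | ∀ σ : S → Bool, (fun s => v (s, σ s)) ∈ P}.ncard := by
  classical
  have := Fintype.ofFinite S
  have key : ∀ U : Finset S, Nat.card (S × Bool → R) ≤ K ^ 2 ^ U.card *
      {v : S × Bool → R | ∀ σ : S → Bool, (∀ s ∉ U, σ s = false) →
        (fun s => v (s, σ s)) ∈ P}.ncard := by
    intro U
    induction U using Finset.induction_on with
    | empty =>
      have e : {v : S × Bool → R | ∀ σ : S → Bool, (∀ s ∉ (∅ : Finset S), σ s = false) →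
          (fun s => v (s, σ s)) ∈ P} ≃ P × (S → R) :=
        { toFun := fun v => (⟨fun s => v.1 (s, false), v.2 (fun _ => false) (by simp)⟩,
            fun s => v.1 (s, true))
          invFun := fun p => ⟨fun s => if s.2 then p.2 s.1 else p.1.1 s.1, by
            intro σ hσ
            have : σ = fun _ => false := funext fun s => hσ s (by simp)
            subst this
            simp⟩
          left_inv := by
            rintro ⟨v, hv⟩
            ext ⟨s, b⟩
            cases b <;> simp
          right_inv := by
            rintro ⟨⟨u, hu⟩, w⟩
            simp }
      rw [← Nat.card_coe_set_eq, Nat.card_congr e, Nat.card_prod, Nat.card_coe_set_eq,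
        Finset.card_empty, pow_zero, pow_one, ← mul_assoc]
      refine le_trans (le_of_eq ?_) (Nat.mul_le_mul_right _ hP)
      simp only [Nat.card_fun, Nat.card_eq_fintype_card, Fintype.card_prod, Fintype.card_bool]
      ring
    | insert t U ht ih =>
      set W := Nat.card (S × Bool → R) with hW
      have hW0 : 0 < W := Nat.card_pos
      set Q := {v : S × Bool → R | ∀ σ : S → Bool, (∀ s ∉ U, σ s = false) →
        (fun s => v (s, σ s)) ∈ P} with hQ
      have hind : ∀ v x, Function.update v (t, true) x ∈ Q ↔ v ∈ Q := by
        intro v x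
        refine forall_congr' fun σ => forall_congr' fun hσ => ?_
        have : (fun s => Function.update v (t, true) x (s, σ s)) = fun s => v (s, σ s) := by
          ext s
          rw [Function.update_of_ne]
          rintro h
          have h1 := congrArg Prod.fst h
          have h2 := congrArg Prod.snd h
          simp only at h1 h2
          subst h1
          simp [hσ s ht] at h2
        rw [this]
      have hcs := sq_ncard_le_of_indep (i := (t, false)) (j := (t, true)) (by simp) hind
      have hsub : {v | v ∈ Q ∧ v ∘ Equiv.swap (t, false) (t, true) ∈ Q} ⊆
          {v : S × Bool → R | ∀ σ : S → Bool, (∀ s ∉ insert t U, σ s = false) →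
            (fun s => v (s, σ s)) ∈ P} := by
        rintro v ⟨h1, h2⟩ σ hσ
        cases ht' : σ t with
        | false =>
          refine h1 σ fun s hs => ?_
          by_cases hst : s = t
          · rw [hst, ht']
          · exact hσ s (by simp [hs, hst])
        | true =>
          have h3 := h2 (Function.update σ t false) fun s hs => by
            by_cases hst : s = t
            · subst hst
              simp
            · rw [Function.update_of_ne hst]
              exact hσ s (by simp [hs, hst])
          convert h3 using 2 with s
          by_cases hst : s = t
          · subst hst
            simp [ht']
          · simp only [Function.comp, Function.update_of_ne hst]
            rw [Equiv.swap_apply_of_ne_of_ne] <;> simp [hst]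
      have hle := Set.ncard_le_ncard hsub (Set.toFinite _)
      rw [Finset.card_insert_of_notMem ht]
      refine Nat.le_of_mul_le_mul_left ?_ hW0
      calc W * W ≤ (K ^ 2 ^ U.card * Q.ncard) * (K ^ 2 ^ U.card * Q.ncard) := Nat.mul_le_mul ih ih
        _ = K ^ 2 ^ (U.card + 1) * Q.ncard ^ 2 := by ring
        _ ≤ K ^ 2 ^ (U.card + 1) * (W * _) :=
          Nat.mul_le_mul_left _ (hcs.trans (Nat.mul_le_mul_left _ hle))
        _ = _ := by ring
  have := key Finset.univ
  simpa [Nat.card_eq_fintype_card] using this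

end Counting

section Largeness

variable {N S : Type*} (ρ : N → ℕ → Prop)

/-- `D` contains a set of at least a `1 / K` fraction of representatives of the tuples of strings
of length `n`, where `F s` chooses for every string an element with these initial digits. -/
def LargeAt (K n : ℕ) (D : Set (S → N)) : Prop :=
  ∃ F : S → (Fin n → Bool) → N, (∀ s r i, ρ (F s r) i.1 ↔ r i = true) ∧
    Nat.card (S → Fin n → Bool) ≤ K * {r : S → Fin n → Bool | (fun s => F s (r s)) ∈ D}.ncard

/-- `D` contains a positive fraction of the tuples, uniformly in the number of digits. -/
def Large (D : Set (S → N)) : Prop := ∃ K, ∀ n, LargeAt ρ K n D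

variable {ρ} {K n : ℕ} {D E : Set (S → N)}

theorem LargeAt.of_union (h : LargeAt ρ K n (D ∪ E)) :
    LargeAt ρ (2 * K) n D ∨ LargeAt ρ (2 * K) n E := by
  obtain ⟨F, hF, h⟩ := h
  have := Set.ncard_union_le {r : S → Fin n → Bool | (fun s => F s (r s)) ∈ D}
    {r : S → Fin n → Bool | (fun s => F s (r s)) ∈ E}
  have hu : {r : S → Fin n → Bool | (fun s => F s (r s)) ∈ D ∪ E} =
    {r : S → Fin n → Bool | (fun s => F s (r s)) ∈ D} ∪
    {r : S → Fin n → Bool | (fun s => F s (r s)) ∈ E} := rfl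
  rw [hu] at h
  have h' := h.trans (Nat.mul_le_mul_left K this)
  rcases le_total {r : S → Fin n → Bool | (fun s => F s (r s)) ∈ D}.ncard
    {r : S → Fin n → Bool | (fun s => F s (r s)) ∈ E}.ncard with hle | hle
  · exact .inr ⟨F, hF, by nlinarith⟩
  · exact .inl ⟨F, hF, by nlinarith⟩

theorem large_univ (hρ : ∀ n (r : Fin n → Bool), ∃ x, ∀ i, ρ x i.1 ↔ r i = true) :
    Large ρ (Set.univ : Set (S → N)) := by
  refine ⟨1, fun n => ?_⟩
  choose F hF using hρ n
  exact ⟨fun _ => F, fun _ => hF, by simp⟩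

variable [Finite S]

theorem LargeAt.mono {K' : ℕ} (hK : K ≤ K') (hD : D ⊆ E) (h : LargeAt ρ K n D) :
    LargeAt ρ K' n E := by
  obtain ⟨F, hF, h⟩ := h
  refine ⟨F, hF, h.trans (Nat.mul_le_mul hK (Set.ncard_le_ncard ?_ (Set.toFinite _)))⟩
  exact fun r hr => hD hr

theorem LargeAt.nonempty (h : LargeAt ρ K n D) : D.Nonempty := by
  obtain ⟨F, -, h⟩ := h
  have hpos : 0 < K * {r : S → Fin n → Bool | (fun s => F s (r s)) ∈ D}.ncard :=
    Nat.card_pos.trans_le h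
  obtain ⟨r, hr⟩ := Set.nonempty_of_ncard_ne_zero (Nat.pos_of_mul_pos_left hpos).ne'
  exact ⟨_, hr⟩

theorem LargeAt.of_succ (h : LargeAt ρ K (n + 1) D) : LargeAt ρ K n D := by
  classical
  have := Fintype.ofFinite S
  obtain ⟨F, hF, h⟩ := h
  by_contra H
  have hlt : ∀ β : S → Bool, K * {r : S → Fin n → Bool |
      (fun s => F s (Fin.snoc (α := fun _ => Bool) (r s) (β s))) ∈ D}.ncard <
        Nat.card (S → Fin n → Bool) := by
    intro β
    by_contra hβ
    refine H ⟨fun s r => F s (Fin.snoc (α := fun _ => Bool) r (β s)), fun s r i => ?_,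
      not_lt.1 hβ⟩
    have := hF s (Fin.snoc (α := fun _ => Bool) r (β s)) i.castSucc
    simpa using this
  let f : (Σ β : S → Bool, {r : S → Fin n → Bool |
        (fun s => F s (Fin.snoc (α := fun _ => Bool) (r s) (β s))) ∈ D}) →
      {r : S → Fin (n + 1) → Bool | (fun s => F s (r s)) ∈ D} :=
    fun p => ⟨fun s => Fin.snoc (α := fun _ => Bool) (p.2.1 s) (p.1 s), p.2.2⟩
  have hf : Function.Surjective f := by
    rintro ⟨r, hr⟩
    refine ⟨⟨fun s => r s (Fin.last n), fun s => Fin.init (r s), ?_⟩, ?_⟩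
    · simpa using hr
    · simp [f]
  have hcard := Nat.card_le_card_of_surjective f hf
  have hsum := Finset.sum_lt_sum_of_nonempty Finset.univ_nonempty fun β _ => hlt β
  rw [← Finset.mul_sum] at hsum
  simp_rw [← Nat.card_coe_set_eq] at hsum h
  rw [← Nat.card_sigma] at hsum
  refine absurd ((h.trans (Nat.mul_le_mul_left K hcard)).trans_lt hsum) (not_lt.2 (le_of_eq ?_))
  simp only [Finset.sum_const, Finset.card_univ, Nat.card_eq_fintype_card, Fintype.card_pi,
    Fintype.card_bool, Finset.prod_const, Fintype.card_fin, smul_eq_mul]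
  rw [← mul_pow, pow_succ']

theorem LargeAt.anti {m : ℕ} (hmn : m ≤ n) (h : LargeAt ρ K n D) : LargeAt ρ K m D := by
  induction n, hmn using Nat.le_induction with
  | base => exact h
  | succ n _ ih => exact ih h.of_succ

theorem Large.mono (hD : D ⊆ E) (h : Large ρ D) : Large ρ E :=
  h.imp fun _ hK n => (hK n).mono le_rfl hD

theorem largeAt_sdiff (hD : ∀ n, LargeAt ρ K n D) (hE : ¬ Large ρ E) (n : ℕ) :
    LargeAt ρ (2 * K) n (D \ E) := by
  simp only [Large, not_exists, not_forall] at hE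
  obtain ⟨m, hm⟩ := hE (2 * K)
  refine LargeAt.anti (le_max_left n m) ?_
  refine (((hD (max n m)).mono le_rfl (by simp : D ⊆ E ∪ D \ E)).of_union).resolve_left
    fun h => hm (h.anti (le_max_right _ _))

theorem Large.of_union (h : Large ρ (D ∪ E)) : Large ρ D ∨ Large ρ E := by
  by_contra! H
  obtain ⟨K, hK⟩ := h
  exact H.1 (Large.mono (by simp) ⟨2 * K, largeAt_sdiff hK H.2⟩)

theorem Large.exists_of_biUnion {κ : Type*} (t : Finset κ) {E : κ → Set (S → N)}
    (h : Large ρ (⋃ i ∈ t, E i)) : ∃ i ∈ t, Large ρ (E i) := by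
  classical
  induction t using Finset.induction_on with
  | empty =>
    obtain ⟨K, hK⟩ := h
    simpa using (hK 0).nonempty
  | insert a t _ ih =>
    rw [Finset.set_biUnion_insert] at h
    rcases h.of_union with h | h
    · exact ⟨a, by simp, h⟩
    · obtain ⟨i, hi, h⟩ := ih h
      exact ⟨i, by simp [hi], h⟩

/-- A large set contains a large set on which the coordinate `s₀` is separated, at one digit, from
a given function of the other coordinates. -/
theorem Large.exists_digit_ne (hD : Large ρ D) (s₀ : S) (g : (S → N) → ℕ → Prop)
    (hg : ∀ x y : S → N, (∀ s ≠ s₀, x s = y s) → g x = g y) :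
    ∃ i, Large ρ {x | x ∈ D ∧ ¬ (g x i ↔ ρ (x s₀) i)} := by
  classical
  by_contra H
  rw [not_exists] at H
  obtain ⟨K, hK⟩ := hD
  obtain ⟨m, hm⟩ : ∃ m, 2 * K < 2 ^ m := ⟨_, Nat.lt_two_pow_self⟩
  have hE : ¬ Large ρ (⋃ i ∈ Finset.range m, {x | x ∈ D ∧ ¬ (g x i ↔ ρ (x s₀) i)}) := by
    intro h
    obtain ⟨i, -, hi⟩ := h.exists_of_biUnion
    exact H i hi
  obtain ⟨F, hF, h⟩ := largeAt_sdiff hK hE m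
  set Q := {r : S → Fin m → Bool | (fun s => F s (r s)) ∈
    D \ ⋃ i ∈ Finset.range m, {x | x ∈ D ∧ ¬ (g x i ↔ ρ (x s₀) i)}} with hQ
  have hdet : ∀ r ∈ Q, ∀ i : Fin m, r s₀ i = true ↔ g (fun s => F s (r s)) i := by
    rintro r ⟨hr, hr'⟩ i
    simp only [Set.mem_iUnion, Finset.mem_range, not_exists] at hr'
    have := hr' i.1 i.2
    simp only [Set.mem_ofPred_eq, not_and, not_not] at this
    rw [this hr, hF]
  have hle : Nat.card (Q × (Fin m → Bool)) ≤ Nat.card (S → Fin m → Bool) := by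
    refine Nat.card_le_card_of_injective (fun p => Function.update p.1.1 s₀ p.2) ?_
    rintro ⟨⟨r, hr⟩, b⟩ ⟨⟨r', hr'⟩, b'⟩ h
    have hb : b = b' := by simpa using congrFun h s₀
    have hne : ∀ s ≠ s₀, r s = r' s := fun s hs => by
      simpa [Function.update_of_ne hs] using congrFun h s
    have h0 : r s₀ = r' s₀ := by
      ext i
      rw [Bool.eq_iff_iff, hdet r hr, hdet r' hr', hg _ _ fun s hs => ?_]
      simp only [hne s hs]
    have hrr : r = r' := funext fun s => by
      by_cases hs : s = s₀
      · rw [hs, h0]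
      · exact hne s hs
    subst hrr hb
    rfl
  rw [Nat.card_prod, Nat.card_coe_set_eq] at hle
  have hpos : 0 < Q.ncard := by
    by_contra h0
    have : 0 < Nat.card (S → Fin m → Bool) := Nat.card_pos
    simp only [not_lt, nonpos_iff_eq_zero] at h0
    rw [h0] at h
    omega
  have h2 : Nat.card (Fin m → Bool) = 2 ^ m := by simp
  rw [h2] at hle
  have := hle.trans h
  nlinarith

theorem Large.double (hD : Large ρ D) :
    Large ρ {v : S × Bool → N | ∀ σ : S → Bool, (fun s => v (s, σ s)) ∈ D} := by
  obtain ⟨K, hK⟩ := hD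
  refine ⟨K ^ 2 ^ Nat.card S, fun n => ?_⟩
  obtain ⟨F, hF, h⟩ := hK n
  exact ⟨fun s => F s.1, fun s => hF s.1, card_le_mul_ncard_double h⟩

end Largeness

end Arith

namespace Arith
namespace PAModel

section CodedLargeness

variable {M : Type*} [arith.Structure M] [PAModel M] {α S : Type*} {f g h k : (α → M) → M}

@[fun_prop]
theorem definableFun_pow (hf : Set.univ.DefinableFun arith f) (n : ℕ) :
    Set.univ.DefinableFun arith fun v => f v ^ n := by
  induction n with
  | zero =>
    simp only [pow_zero]
    fun_prop
  | succ n ih =>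
    simp only [pow_succ]
    fun_prop

@[fun_prop]
theorem defPred_beta (hf : Set.univ.DefinableFun arith f) (hg : Set.univ.DefinableFun arith g)
    (hh : Set.univ.DefinableFun arith h) (hk : Set.univ.DefinableFun arith k) :
    DefPred Set.univ fun v => Beta (f v) (g v) (h v) (k v) := by
  have H : DefPred Set.univ fun v : Fin 4 → M => Beta (v 0) (v 1) (v 2) (v 3) := by
    unfold Beta
    fun_prop
  exact H.subst (F := ![f, g, h, k]) (by simp [Fin.forall_fin_succ, hf, hg, hh, hk])

/-- An internal version of `LargeAt`: the representatives are listed by a coded sequence. -/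
def CodedLarge (K : ℕ) (E : (S → M) → Prop) (q : M) : Prop :=
  ∃ m c, ∃ a : S → M, (c ≤ q ^ Nat.card S ∧ q ^ Nat.card S ≤ K * c) ∧
    (∀ l < c, ∃ x : S → M, (∀ s, Beta (a s) m l (x s)) ∧ E x) ∧
    ∀ l < c, ∀ l' < c, l ≠ l' → ∀ x : S → M, (∀ s, Beta (a s) m l (x s)) →
      ∀ x' : S → M, (∀ s, Beta (a s) m l' (x' s)) → (¬ ∀ s, x s = x' s) ∧
        ∀ s, (∀ p < q, Pow2 p → (Dig (x s) p ↔ Dig (x' s) p)) → x s = x' s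

theorem defPred_codedLarge [Finite S] {E : (α → M) → (S → M) → Prop}
    (hE : DefPred Set.univ fun w : α ⊕ S → M => E (fun i => w (.inl i)) (fun s => w (.inr s)))
    (K : ℕ) (q : α) : DefPred Set.univ fun v => CodedLarge K (E v) (v q) := by
  unfold CodedLarge
  refine DefPred.exists (DefPred.exists (DefPred.exists_tuple (DefPred.and (by fun_prop)
    (DefPred.and (DefPred.forall (DefPred.imp (by fun_prop) (DefPred.exists_tuple
      (DefPred.and (DefPred.forall_finite fun s => by fun_prop) ?_))))
      (DefPred.forall (DefPred.imp (by fun_prop) (DefPred.forall (DefPred.imp (by fun_prop)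
        (DefPred.imp (by fun_prop) (DefPred.forall_tuple (DefPred.imp
          (DefPred.forall_finite fun s => by fun_prop) (DefPred.forall_tuple (DefPred.imp
            (DefPred.forall_finite fun s => by fun_prop) (DefPred.and
              (DefPred.not (DefPred.forall_finite fun s => by fun_prop))
                (DefPred.forall_finite fun s => by fun_prop)))))))))))))))
  exact hE.comp (Sum.elim (fun i => Sum.inl (some (Sum.inl (some (some i))))) Sum.inr :
    α ⊕ S → Option (Option (Option α) ⊕ S) ⊕ S)

theorem exists_digitB_eq (n : ℕ) (r : Fin n → Bool) :
    ∃ x : M, ∀ i, digitB x i.1 ↔ r i = true := by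
  obtain ⟨x, hx⟩ := exists_nat_testBit (fun i => ∃ h : i < n, r ⟨i, h⟩ = true) n
  refine ⟨x, fun i => ?_⟩
  rw [digitB_iff, dig_natCast, hx i.1 i.2]
  simp

theorem forall_lt_two_pow_iff {x y : M} {n : ℕ} :
    (∀ p < ((2 ^ n : ℕ) : M), Pow2 p → (Dig x p ↔ Dig y p)) ↔
      ∀ i < n, (digitB x i ↔ digitB y i) := by
  constructor
  · intro h i hi
    rw [digitB_iff, digitB_iff]
    exact h _ (by exact_mod_cast Nat.pow_lt_pow_right one_lt_two hi) (pow2_natCast.2 ⟨i, rfl⟩)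
  · intro h p hp hp2
    obtain ⟨p, hpn, rfl⟩ := exists_natCast_of_lt hp
    obtain ⟨i, rfl⟩ := pow2_natCast.1 hp2
    rw [← digitB_iff, ← digitB_iff]
    exact h i ((Nat.pow_lt_pow_iff_right one_lt_two).1 hpn)

theorem codedLarge_iff [Finite S] {K n : ℕ} {E : Set (S → M)} :
    CodedLarge K (· ∈ E) ((2 ^ n : ℕ) : M) ↔ LargeAt digitB K n E := by
  classical
  have := Fintype.ofFinite S
  have hcard : Nat.card (S → Fin n → Bool) = (2 ^ n) ^ Nat.card S := by
    simp [Nat.card_eq_fintype_card]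
  simp only [CodedLarge, forall_lt_two_pow_iff]
  constructor
  · rintro ⟨m, c, a, ⟨hc, hKc⟩, hx, hsep⟩
    obtain ⟨c, -, rfl⟩ := exists_natCast_of_le (x := c) (n := (2 ^ n) ^ Nat.card S)
      (by exact_mod_cast hc)
    have hKc' : (2 ^ n) ^ Nat.card S ≤ K * c := by exact_mod_cast hKc
    choose x hx hxE using fun l : Fin c => hx l.1 (by exact_mod_cast l.2)
    have hne : ∀ l l' : Fin c, l ≠ l' → (¬ ∀ s, x l s = x l' s) ∧
        ∀ s, (∀ i < n, digitB (x l s) i ↔ digitB (x l' s) i) → x l s = x l' s := by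
      intro l l' hl
      exact hsep l.1 (by exact_mod_cast l.2) l'.1 (by exact_mod_cast l'.2)
        (by exact_mod_cast fun h => hl (Fin.ext h)) _ (hx l) _ (hx l')
    have hsep' : ∀ (l l' : Fin c) s, (∀ i < n, digitB (x l s) i ↔ digitB (x l' s) i) →
        x l s = x l' s := by
      intro l l' s h
      by_cases hl : l = l'
      · rw [hl]
      · exact (hne l l' hl).2 s h
    have hF : ∀ s (r : Fin n → Bool), ∃ y : M, (∀ i, digitB y i.1 ↔ r i = true) ∧
        ∀ l, (∀ i : Fin n, digitB (x l s) i.1 ↔ r i = true) → x l s = y := by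
      intro s r
      by_cases h : ∃ l, ∀ i : Fin n, digitB (x l s) i.1 ↔ r i = true
      · obtain ⟨l, hl⟩ := h
        refine ⟨x l s, hl, fun l' hl' => hsep' _ _ _ fun i hi => ?_⟩
        rw [hl ⟨i, hi⟩, hl' ⟨i, hi⟩]
      · obtain ⟨y, hy⟩ := exists_digitB_eq (M := M) n r
        exact ⟨y, hy, fun l hl => absurd ⟨l, hl⟩ h⟩
    choose F hF hxF using hF
    refine ⟨F, hF, ?_⟩
    rw [hcard]
    refine hKc'.trans (Nat.mul_le_mul_left K ?_)
    let res : Fin c → S → Fin n → Bool := fun l s i => decide (digitB (x l s) i)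
    have hres : ∀ l s, F s (res l s) = x l s := fun l s =>
      (hxF s _ l fun i => by simp [res]).symm
    have hinj : Function.Injective
        fun l : Fin c => (⟨res l, by simp only [Set.mem_ofPred_eq, hres]; exact hxE l⟩ :
          {r : S → Fin n → Bool | (fun s => F s (r s)) ∈ E}) := by
      intro l l' h
      by_contra hl
      refine (hne l l' hl).1 fun s => ?_
      rw [← hres l, ← hres l', Subtype.mk.inj h]
    have := Nat.card_le_card_of_injective _ hinj
    rwa [Nat.card_fin, Nat.card_coe_set_eq] at this
  · rintro ⟨F, hF, h⟩
    set Q := {r : S → Fin n → Bool | (fun s => F s (r s)) ∈ E} with hQ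
    have e : Fin Q.ncard ≃ Q := (finCongr (Nat.card_coe_set_eq Q)).symm.trans
      (Finite.equivFin Q).symm
    obtain ⟨m, a, ha⟩ := exists_beta_family (M := M) (S := S)
      (fun s j => if h : j < Q.ncard then F s ((e ⟨j, h⟩).1 s) else 0) Q.ncard
    have ha' : ∀ (j : ℕ) (hj : j < Q.ncard) (x : S → M), (∀ s, Beta (a s) m j (x s)) ↔
        x = fun s => F s ((e ⟨j, hj⟩).1 s) := by
      intro j hj x
      simp only [ha _ j hj, hj, dif_pos, funext_iff]
    refine ⟨m, Q.ncard, a, ⟨?_, ?_⟩, fun l hl => ?_, fun l hl l' hl' hll x hx x' hx' => ?_⟩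
    · have : Q.ncard ≤ Nat.card (S → Fin n → Bool) := by
        rw [← Set.ncard_univ]
        exact Set.ncard_le_ncard (Set.subset_univ _) (Set.toFinite _)
      rw [hcard] at this
      exact_mod_cast this
    · rw [hcard] at h
      exact_mod_cast h
    · obtain ⟨l, hl', rfl⟩ := exists_natCast_of_lt hl
      exact ⟨_, (ha' l hl' _).2 rfl, (e ⟨l, hl'⟩).2⟩
    · obtain ⟨l, hlt, rfl⟩ := exists_natCast_of_lt hl
      obtain ⟨l', hlt', rfl⟩ := exists_natCast_of_lt hl'
      rw [ha' l hlt] at hx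
      rw [ha' l' hlt'] at hx'
      subst hx hx'
      have hr : ∀ s, (∀ i < n, digitB (F s ((e ⟨l, hlt⟩).1 s)) i ↔
          digitB (F s ((e ⟨l', hlt'⟩).1 s)) i) → (e ⟨l, hlt⟩).1 s = (e ⟨l', hlt'⟩).1 s := by
        intro s h
        ext i
        have := h i.1 i.2
        rwa [hF, hF, ← Bool.eq_iff_iff] at this
      refine ⟨fun h => hll ?_, fun s h => ?_⟩
      · have : e ⟨l, hlt⟩ = e ⟨l', hlt'⟩ := Subtype.ext (funext fun s => hr s fun i _ => by
          simp only at h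
          rw [h s])
        rw [Fin.mk.inj (e.injective this)]
      · simp only [hr s h]

/-- If for a definable family `Q` of unary predicates and a set `a` of natural numbers, the
disagreement sets are all small, then `a` is in the standard system. -/
theorem mem_SSy_of_not_large [Finite S] (hM : ∃ x : M, ¬ IsStd x) {D : Set (S → M)}
    (hDdef : Set.univ.Definable arith D) (hD : Large digitB D) {Q : (S → M) → M → Prop}
    (hQ : DefPred Set.univ fun w : Option S → M => Q (fun s => w (some s)) (w none)) {a : Set ℕ}
    (h : ∀ i : ℕ, ¬ Large digitB {x | x ∈ D ∧ ¬ (Q x ((2 ^ i : ℕ) : M) ↔ i ∈ a)}) :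
    a ∈ SSy M := by
  obtain ⟨K, hK⟩ := hD
  have hDdef' : DefPred Set.univ fun v => v ∈ D := hDdef
  let R₁ : M → M → Prop := fun p q => Pow2 q ∧ ¬ CodedLarge (2 * K) (· ∈ {x | x ∈ D ∧ ¬ Q x p}) q
  let R₀ : M → M → Prop := fun p q => Pow2 q ∧ ¬ CodedLarge (2 * K) (· ∈ {x | x ∈ D ∧ Q x p}) q
  have hdef : DefPred Set.univ fun v : Fin 1 → M =>
      ∃ q, R₁ (v 0) q ∧ ∀ q' ≤ q, ¬ R₀ (v 0) q' := by
    refine DefPred.exists (DefPred.and (DefPred.and (by fun_prop)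
      (DefPred.not (defPred_codedLarge (DefPred.and ?_ (DefPred.not ?_)) _ none)))
      (DefPred.forall (DefPred.imp (by fun_prop) (DefPred.not (DefPred.and (by fun_prop)
      (DefPred.not (defPred_codedLarge (DefPred.and ?_ ?_) _ none)))))))
    · exact hDdef'.comp Sum.inr
    · exact hQ.comp fun s : Option S =>
        (s.elim (Sum.inl (some 0)) Sum.inr : Option (Fin 1) ⊕ S)
    · exact hDdef'.comp Sum.inr
    · exact hQ.comp fun s : Option S =>
        (s.elim (Sum.inl (some (some 0))) Sum.inr : Option (Option (Fin 1)) ⊕ S)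
  have hmem := mem_SSy_of_defPred (P := fun p => ∃ q, R₁ p q ∧ ∀ q' ≤ q, ¬ R₀ p q') hM hdef
  have hR₁ : ∀ i n : ℕ, R₁ ((2 ^ i : ℕ) : M) ((2 ^ n : ℕ) : M) ↔
      ¬ LargeAt digitB (2 * K) n {x | x ∈ D ∧ ¬ Q x ((2 ^ i : ℕ) : M)} := fun i n => by
    simp only [R₁, codedLarge_iff, pow2_natCast.2 ⟨n, rfl⟩, true_and]
  have hR₀ : ∀ i n : ℕ, R₀ ((2 ^ i : ℕ) : M) ((2 ^ n : ℕ) : M) ↔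
      ¬ LargeAt digitB (2 * K) n {x | x ∈ D ∧ Q x ((2 ^ i : ℕ) : M)} := fun i n => by
    simp only [R₀, codedLarge_iff, pow2_natCast.2 ⟨n, rfl⟩, true_and]
  have hor : ∀ i n : ℕ, LargeAt digitB (2 * K) n {x | x ∈ D ∧ ¬ Q x ((2 ^ i : ℕ) : M)} ∨
      LargeAt digitB (2 * K) n {x | x ∈ D ∧ Q x ((2 ^ i : ℕ) : M)} := fun i n =>
    LargeAt.of_union ((hK n).mono le_rfl fun x hx => by
      by_cases hq : Q x ((2 ^ i : ℕ) : M)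
      · exact .inr ⟨hx, hq⟩
      · exact .inl ⟨hx, hq⟩)
  convert hmem using 1
  ext i
  simp only [Set.mem_ofPred_eq]
  have hi := h i
  simp only [Large, not_exists, not_forall] at hi
  obtain ⟨n, hn⟩ := hi (2 * K)
  constructor
  · intro hia
    simp only [hia, iff_true] at hn
    refine ⟨_, (hR₁ i n).2 hn, fun q' hq' hR => ?_⟩
    obtain ⟨q', hq'n, rfl⟩ := exists_natCast_of_le hq'
    obtain ⟨n', rfl⟩ := pow2_natCast.1 hR.1
    exact (hR₀ i n').1 hR (((hor i n).resolve_left hn).anti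
      ((Nat.pow_le_pow_iff_right one_lt_two).1 hq'n))
  · rintro ⟨q, hq, hq'⟩
    by_contra hia
    simp only [hia, iff_false, not_not] at hn
    rcases le_total ((2 ^ n : ℕ) : M) q with hle | hle
    · exact hq' _ hle ((hR₀ i n).2 hn)
    · obtain ⟨q, hqn, rfl⟩ := exists_natCast_of_le hle
      obtain ⟨n', rfl⟩ := pow2_natCast.1 hq.1
      exact (hR₁ i n').1 hq (((hor i n).resolve_right hn).anti
        ((Nat.pow_le_pow_iff_right one_lt_two).1 hqn))

end CodedLargeness

end PAModel
end Arith

namespace Arith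

instance : Countable arith.Symbols := by
  have h₁ : ∀ n, Countable (arith.Functions n) := fun n =>
    Function.Injective.countable (f := fun f : arithFunc n => match f with
      | .zero => 0 | .one => 1 | .add => 2 | .mul => (3 : ℕ))
      (by rintro ⟨⟩ ⟨⟩ h <;> first | rfl | simp at h)
  have h₂ : ∀ n, Countable (arith.Relations n) := fun n =>
    Function.Injective.countable (f := fun _ : arithRel n => (0 : ℕ)) (by rintro ⟨⟩ ⟨⟩ _; rfl)
  exact inferInstanceAs (Countable ((Σ n, arith.Functions n) ⊕ Σ n, arith.Relations n))

theorem DefPred.const {M : Type*} [arith.Structure M] {α : Type*} {A : Set M} (p : Prop) :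
    DefPred A fun _ : α → M => p := by
  by_cases h : p
  · simp [DefPred, h]
  · simp [DefPred, h]

section Generic

/-- Binary strings of length `k`. -/
def Str : ℕ → Type
  | 0 => Unit
  | k + 1 => Str k × Bool

instance Str.finite : ∀ k, Finite (Str k)
  | 0 => inferInstanceAs (Finite Unit)
  | k + 1 => by
    have := Str.finite k
    exact inferInstanceAs (Finite (Str k × Bool))

open Classical in
/-- The string of length `k` consisting of the first values of the characteristic function
of `x`. -/
noncomputable def restr (x : Set ℕ) : ∀ k, Str k
  | 0 => ()
  | k + 1 => (restr x k, decide (k ∈ x))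

theorem restr_eq_of_le {x y : Set ℕ} {k l : ℕ} (hkl : k ≤ l) (h : restr x l = restr y l) :
    restr x k = restr y k := by
  induction l, hkl using Nat.le_induction with
  | base => exact h
  | succ l _ ih => exact ih (congrArg Prod.fst h)

theorem exists_restr_ne {x y : Set ℕ} (h : x ≠ y) : ∃ k, restr x k ≠ restr y k := by
  by_contra! H
  refine h (Set.ext fun i => ?_)
  have := congrArg Prod.snd (H (i + 1))
  simpa [restr] using this

theorem exists_injective_restr {J : Type*} [Finite J] {x : J → Set ℕ}
    (hx : Function.Injective x) :
    ∃ k, ∀ l, k ≤ l → Function.Injective fun j => restr (x j) l := by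
  have := Fintype.ofFinite J
  have H : ∀ p : J × J, ∃ k, p.1 ≠ p.2 → restr (x p.1) k ≠ restr (x p.2) k := by
    intro p
    by_cases hp : p.1 = p.2
    · exact ⟨0, fun h => absurd hp h⟩
    · exact (exists_restr_ne (hx.ne hp)).imp fun _ h _ => h
  choose k hk using H
  refine ⟨Finset.univ.sup k, fun l hl i j hij => ?_⟩
  by_contra hne
  exact hk (i, j) hne (restr_eq_of_le ((Finset.le_sup (Finset.mem_univ (i, j))).trans hl) hij)

variable {N : Type*} [arith.Structure N]

/-- A family of sets of tuples is unavoidable if every large definable set has a large subset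
on which some fixed member of the family holds, for any choice of coordinates. -/
def Unavoidable {J : Type} (P : ℕ → Set (J → N)) : Prop :=
  ∀ (S : Type) [Finite S] (D : Set (S → N)), Set.univ.Definable arith D → Large digitB D →
    ∀ s : J → S, Function.Injective s → ∃ i, Large digitB {v | v ∈ D ∧ v ∘ s ∈ P i}

/-- The definable large sets of tuples indexed by strings of length `k`. -/
structure Cond (N : Type*) [arith.Structure N] (k : ℕ) where
  carrier : Set (Str k → N)
  definable : Set.univ.Definable arith carrier
  large : Large digitB carrier

theorem exists_large_forall_mem {J : Type} [Finite J] {P : ℕ → Set (J → N)} (hP : Unavoidable P)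
    (hPdef : ∀ i, Set.univ.Definable arith (P i)) {S : Type} [Finite S] {D : Set (S → N)}
    (hDdef : Set.univ.Definable arith D) (hD : Large digitB D) :
    ∃ D' ⊆ D, Set.univ.Definable arith D' ∧ Large digitB D' ∧
      ∀ s : J → S, Function.Injective s → ∃ i, ∀ v ∈ D', v ∘ s ∈ P i := by
  suffices H : ∀ T : Set (J → S), T.Finite → ∃ D' ⊆ D, Set.univ.Definable arith D' ∧
      Large digitB D' ∧ ∀ s ∈ T, Function.Injective s → ∃ i, ∀ v ∈ D', v ∘ s ∈ P i by
    obtain ⟨D', h₁, h₂, h₃, h₄⟩ := H Set.univ Set.finite_univ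
    exact ⟨D', h₁, h₂, h₃, fun s => h₄ s trivial⟩
  intro T hT
  induction T, hT using Set.Finite.induction_on with
  | empty => exact ⟨D, subset_rfl, hDdef, hD, by simp⟩
  | @insert s T _ _ ih =>
    obtain ⟨D', h₁, h₂, h₃, h₄⟩ := ih
    by_cases hs : Function.Injective s
    · obtain ⟨i, hi⟩ := hP S D' h₂ h₃ s hs
      refine ⟨_, fun v hv => h₁ hv.1, h₂.inter ((hPdef i).preimage_comp s), hi, ?_⟩
      rintro t (rfl | ht) hinj
      · exact ⟨i, fun v hv => hv.2⟩
      · exact (h₄ t ht hinj).imp fun _ h v hv => h v hv.1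
    · refine ⟨D', h₁, h₂, h₃, ?_⟩
      rintro t (rfl | ht) hinj
      · exact absurd hinj hs
      · exact h₄ t ht hinj

theorem Cond.exists_next {k : ℕ} (c : Cond N k) {J : Type} [Finite J] {P : ℕ → Set (J → N)}
    (hP : Unavoidable P) (hPdef : ∀ i, Set.univ.Definable arith (P i)) :
    ∃ c' : Cond N (k + 1), (∀ v ∈ c'.carrier, ∀ σ : Str k → Bool,
        (fun s => v (s, σ s)) ∈ c.carrier) ∧
      ∀ s : J → Str (k + 1), Function.Injective s → ∃ i, ∀ v ∈ c'.carrier, v ∘ s ∈ P i := by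
  have hdef : Set.univ.Definable arith
      {v : Str k × Bool → N | ∀ σ : Str k → Bool, (fun s => v (s, σ s)) ∈ c.carrier} :=
    DefPred.forall_finite fun σ => c.definable.preimage_comp fun s => (s, σ s)
  obtain ⟨D', h₁, h₂, h₃, h₄⟩ := exists_large_forall_mem (S := Str k × Bool) hP hPdef hdef
    c.large.double
  exact ⟨⟨D', h₂, h₃⟩, h₁, h₄⟩

theorem exists_generic [PAModel N] {ι : Type*} [Countable ι] (J : ι → Type) [∀ r, Finite (J r)]
    (P : ∀ r, ℕ → Set (J r → N)) (hP : ∀ r, Unavoidable (P r))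
    (hPdef : ∀ r i, Set.univ.Definable arith (P r i)) :
    ∃ d : ∀ k, Str k → N, ∀ (r : ι) (x : J r → Set ℕ), Function.Injective x →
      ∃ i, ∀ᶠ k in Filter.atTop, (fun j => d k (restr (x j) k)) ∈ P r i := by
  rcases isEmpty_or_nonempty ι with hι | hι
  · exact ⟨fun _ _ => 0, fun r => (hι.false r).elim⟩
  obtain ⟨g, hg⟩ := exists_surjective_nat ι
  choose next hsub hmeet using fun (k : ℕ) (c : Cond N k) =>
    c.exists_next (hP (g k.unpair.1)) (hPdef (g k.unpair.1))
  let c : ∀ k, Cond N k := fun k => Nat.rec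
    ⟨Set.univ, Set.definable_univ, large_univ PAModel.exists_digitB_eq⟩ (fun k c => next k c) k
  have hne : ∀ k, (c k).carrier.Nonempty := fun k => by
    obtain ⟨K, hK⟩ := (c k).large
    exact (hK 0).nonempty
  choose d hd using hne
  refine ⟨d, fun r x hx => ?_⟩
  obtain ⟨k₀, hk₀⟩ := exists_injective_restr hx
  obtain ⟨a, rfl⟩ := hg r
  set k := Nat.pair a k₀ with hk
  have hkk : k₀ ≤ k := Nat.right_le_pair a k₀
  have key : ∀ l, k + 1 ≤ l → ∀ v ∈ (c l).carrier, ∃ v' ∈ (c (k + 1)).carrier,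
      ∀ j, v' (restr (x j) (k + 1)) = v (restr (x j) l) := by
    intro l hl
    induction l, hl using Nat.le_induction with
    | base => exact fun v hv => ⟨v, hv, fun _ => rfl⟩
    | succ l hl ih =>
      intro v hv
      classical
      have hinj := hk₀ l (by omega)
      let σ : Str l → Bool :=
        Function.extend (fun j => restr (x j) l) (fun j => decide (l ∈ x j)) fun _ => false
      obtain ⟨v', hv', h⟩ := ih _ (hsub l (c l) v hv σ)
      refine ⟨v', hv', fun j => ?_⟩
      rw [h j]
      have : σ (restr (x j) l) = decide (l ∈ x j) := hinj.extend_apply _ _ j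
      simp only [this]
      rfl
  have hm := hmeet k (c k)
  have hak : k.unpair.1 = a := by simp [hk]
  rw [hak] at hm
  obtain ⟨i, hi⟩ := hm (fun j => restr (x j) (k + 1)) (hk₀ _ (by omega))
  refine ⟨i, Filter.eventually_atTop.2 ⟨k + 1, fun l hl => ?_⟩⟩
  obtain ⟨v', hv', h⟩ := key l hl _ (hd l)
  have := hi v' hv'
  simp only [Function.comp_def, h] at this
  exact this

end Generic

namespace PAModel

variable {N : Type*} [arith.Structure N] [PAModel N] {J : Type}

theorem unavoidable_not_mem [Finite J] (hN : ∃ x : N, ¬ IsStd x) {Q : (J → N) → N → Prop}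
    (hQ : DefPred Set.univ fun w : Option J → N => Q (fun j => w (some j)) (w none)) {a : Set ℕ}
    (ha : a ∉ SSy N) :
    Unavoidable fun i => {u : J → N | ¬ (Q u ((2 ^ i : ℕ) : N) ↔ i ∈ a)} := by
  intro S _ D hDdef hD s _
  by_contra H
  rw [not_exists] at H
  exact ha (mem_SSy_of_not_large (Q := fun v p => Q (v ∘ s) p) hN hDdef hD
    (hQ.comp (Option.map s)) H)

theorem unavoidable_digit_ne (Q : (J → N) → N → Prop) :
    Unavoidable fun i => {u : Option J → N |
      ¬ (Q (fun j => u (some j)) ((2 ^ i : ℕ) : N) ↔ digitB (u none) i)} := by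
  intro S _ D _ hD s hs
  refine hD.exists_digit_ne (s none) (fun v i => Q (fun j => v (s (some j))) ((2 ^ i : ℕ) : N)) ?_
  intro v w h
  have : (fun j => v (s (some j))) = fun j => w (s (some j)) :=
    funext fun j => h _ (hs.ne (by simp))
  simp only [this]

/-- The set of digits of the elements satisfying `θ`. -/
def DigOf (θ : N → Prop) (p : N) : Prop := ∃ y, θ y ∧ Dig y p

/-- The genericity of a family of elements indexed by binary strings: along injective tuples of
branches, the digits of definable elements eventually differ from those of the sets in `A` and
of the elements on other branches. -/
def IsGeneric (A : Set (Set ℕ)) (d : ∀ k, Str k → N) : Prop :=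
  ∀ (n : ℕ) (φ : arith.Formula (N ⊕ Fin n ⊕ Unit)) (x : Fin n → Set ℕ), Function.Injective x →
    (∀ a ∈ A, ∃ i, ∀ᶠ k in Filter.atTop, ¬ (DigOf (fun y => φ.Realize
      (Sum.elim id (Sum.elim (fun j => d k (restr (x j) k)) fun _ => y))) ((2 ^ i : ℕ) : N) ↔
        i ∈ a)) ∧
    ∀ x₀ ∉ Set.range x, ∃ i, ∀ᶠ k in Filter.atTop, ¬ (DigOf (fun y => φ.Realize
      (Sum.elim id (Sum.elim (fun j => d k (restr (x j) k)) fun _ => y))) ((2 ^ i : ℕ) : N) ↔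
        digitB (d k (restr x₀ k)) i)

theorem exists_generic_formula [Countable N] (hN : ∃ x : N, ¬ IsStd x) {A : Set (Set ℕ)}
    (hA : A.Countable) (hAN : ∀ a ∈ A, a ∉ SSy N) :
    ∃ d : ∀ k, Str k → N, IsGeneric A d := by
  have := hA.to_subtype
  let Q : ∀ n, arith.Formula (N ⊕ Fin n ⊕ Unit) → (Fin n → N) → N → Prop := fun n φ u =>
    DigOf fun y => φ.Realize (Sum.elim id (Sum.elim u fun _ => y))
  have hφdef : ∀ n (φ : arith.Formula (N ⊕ Fin n ⊕ Unit)), DefPred Set.univ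
      fun w : Fin n ⊕ Unit → N => φ.Realize (Sum.elim id w) := by
    intro n φ
    refine Set.definable_iff_exists_formula_sum.2
      ⟨φ.relabel (Sum.map (fun x => ⟨x, trivial⟩) id), Set.ext fun w => ?_⟩
    simp only [Set.mem_ofPred_eq, Formula.realize_relabel, Sum.elim_comp_map]
    rfl
  have hQdef : ∀ n φ, DefPred Set.univ
      fun w : Option (Fin n) → N => Q n φ (fun j => w (some j)) (w none) := by
    intro n φ
    refine DefPred.exists (DefPred.and ?_ (by fun_prop))
    convert! (hφdef n φ).comp (Sum.elim (fun j => some (some j)) fun _ => none) using 3 with w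
    ext (i | i | i) <;> rfl
  let F := Σ n, arith.Formula (N ⊕ Fin n ⊕ Unit)
  have : Countable F := inferInstanceAs (Countable (Σ n, arith.Formula (N ⊕ Fin n ⊕ Unit)))
  let J : (F × A) ⊕ F → Type := Sum.elim (fun p => Fin p.1.1) fun p => Option (Fin p.1)
  have : ∀ r, Finite (J r) := by
    rintro (p | p)
    · exact inferInstanceAs (Finite (Fin _))
    · exact inferInstanceAs (Finite (Option (Fin _)))
  let P : ∀ r, ℕ → Set (J r → N) := fun r i => match r with
    | Sum.inl p => {u : Fin p.1.1 → N | ¬ (Q p.1.1 p.1.2 u ((2 ^ i : ℕ) : N) ↔ i ∈ p.2.1)}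
    | Sum.inr p => {u : Option (Fin p.1) → N |
        ¬ (Q p.1 p.2 (fun j => u (some j)) ((2 ^ i : ℕ) : N) ↔ digitB (u none) i)}
  have hQi : ∀ n φ (i : ℕ), DefPred Set.univ fun u : Fin n → N => Q n φ u ((2 ^ i : ℕ) : N) := by
    intro n φ i
    have : DefPred Set.univ fun u : Fin n → N => ∃ p, p = ((2 ^ i : ℕ) : N) ∧ Q n φ u p :=
      DefPred.exists (DefPred.and (by fun_prop) (hQdef n φ))
    simpa using this
  obtain ⟨d, hd⟩ := exists_generic J P (by
    rintro (p | p)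
    · exact unavoidable_not_mem hN (hQdef _ _) (hAN _ p.2.2)
    · exact unavoidable_digit_ne _) (by
    rintro (p | p) i
    · exact DefPred.not (DefPred.iff (hQi _ _ i) (DefPred.const _))
    · refine DefPred.not (DefPred.iff ((hQi p.1 p.2 i).comp some) ?_)
      simp only [digitB_iff]
      fun_prop)
  refine ⟨d, fun n φ x hx => ⟨fun a ha => ?_, fun x₀ hx₀ => ?_⟩⟩
  · exact hd (Sum.inl (⟨n, φ⟩, ⟨a, ha⟩)) x hx
  · exact hd (Sum.inr ⟨n, φ⟩) (fun o : Option (Fin n) => o.elim x₀ x) (by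
      rintro (_ | i) (_ | j) h
      · rfl
      · exact absurd ⟨j, h.symm⟩ hx₀
      · exact absurd ⟨i, h⟩ hx₀
      · rw [hx h])

end PAModel
end Arith

namespace Arith

section Transfer

variable {M M' : Type*} [arith.Structure M'] [arith.Structure M] {α : Type*}

/-- The term for a sum. -/
def addTerm (s t : arith.Term α) : arith.Term α := Functions.apply₂ (L := arith) arithFunc.add s t

/-- The term for a product. -/
def mulTerm (s t : arith.Term α) : arith.Term α := Functions.apply₂ (L := arith) arithFunc.mul s t

/-- The formula expressing the strict order. -/
def ltFormula (s t : arith.Term α) : arith.Formula α :=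
  Relations.formula₂ (L := arith) arithRel.lt s t

theorem realize_addTerm (s t : arith.Term α) (v : α → M) :
    (addTerm s t).realize v = addM (s.realize v) (t.realize v) :=
  Term.realize_functions_apply₂

theorem realize_mulTerm (s t : arith.Term α) (v : α → M) :
    (mulTerm s t).realize v = mulM (s.realize v) (t.realize v) :=
  Term.realize_functions_apply₂

theorem realize_ltFormula (s t : arith.Term α) (v : α → M) :
    (ltFormula s t).Realize v ↔ ltM (s.realize v) (t.realize v) :=
  Formula.realize_rel₂

/-- The term denoting a numeral. -/
def numeralTerm (α : Type*) : ℕ → arith.Term α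
  | 0 => Constants.term (L := arith) arithFunc.zero
  | n + 1 => addTerm (numeralTerm α n) (Constants.term (L := arith) arithFunc.one)

theorem realize_numeralTerm (n : ℕ) (v : α → M) :
    (numeralTerm α n).realize v = numeral M n := by
  induction n with
  | zero => exact congrArg (Structure.funMap (L := arith) arithFunc.zero) (Subsingleton.elim _ _)
  | succ n ih =>
    rw [numeralTerm, realize_addTerm, ih, numeral]
    exact congrArg (fun w => addM _ (Structure.funMap (L := arith) arithFunc.one w))
      (Subsingleton.elim _ _)

/-- The formula expressing that the `i`-th binary digit is `1`. -/
noncomputable def digitFormula (i : ℕ) : arith.Formula Unit :=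
  Formula.iExs (Fin 2) <|
    (Term.var (Sum.inl ())).equal (addTerm
      (mulTerm (Term.var (Sum.inr 0)) (numeralTerm _ (2 ^ (i + 1))))
      (addTerm (numeralTerm _ (2 ^ i)) (Term.var (Sum.inr 1)))) ⊓
    ltFormula (Term.var (Sum.inr 1)) (numeralTerm _ (2 ^ i))

theorem realize_digitFormula {i : ℕ} {v : Unit → M} :
    (digitFormula i).Realize v ↔ digitB (v ()) i := by
  simp only [digitFormula, Formula.realize_iExs, Formula.realize_inf, Formula.realize_equal,
    realize_addTerm, realize_mulTerm, realize_ltFormula, realize_numeralTerm, Term.realize_var,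
    Sum.elim_inl, Sum.elim_inr]
  constructor
  · rintro ⟨u, h⟩
    exact ⟨u 0, u 1, h⟩
  · rintro ⟨u, v, h⟩
    exact ⟨![u, v], h⟩

theorem digitB_map_iff (f : M ↪ₑ[arith] M') {x : M} {i : ℕ} : digitB (f x) i ↔ digitB x i := by
  have := f.map_formula (digitFormula i) fun _ => x
  rwa [realize_digitFormula, realize_digitFormula] at this

theorem map_numeral (f : M ↪ₑ[arith] M') (n : ℕ) : f (numeral M n) = numeral M' n := by
  have := f.map_formula ((Term.var ()).equal (numeralTerm Unit n)) fun _ => numeral M n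
  simp only [Formula.realize_equal, realize_numeralTerm, Term.realize_var, iff_true] at this
  exact this

theorem isStd_map_iff (f : M ↪ₑ[arith] M') {x : M} : IsStd (f x) ↔ IsStd x := by
  simp only [IsStd, ← map_numeral f, f.injective.eq_iff]

theorem mem_SSy_elementarySubstructure {S : arith.ElementarySubstructure M} {a : Set ℕ} :
    a ∈ SSy S ↔ ∃ y ∈ S, ¬ IsStd y ∧ ∀ i, i ∈ a ↔ digitB y i := by
  constructor
  · rintro ⟨y, hy, h⟩
    exact ⟨y, y.2, fun H => hy ((isStd_map_iff S.subtype).1 H),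
      fun i => (h i).trans (digitB_map_iff S.subtype).symm⟩
  · rintro ⟨y, hyS, hy, h⟩
    exact ⟨⟨y, hyS⟩, fun H => hy ((isStd_map_iff S.subtype).2 H),
      fun i => (h i).trans (digitB_map_iff S.subtype (x := ⟨y, hyS⟩))⟩

end Transfer

section DefinableClosure

variable {M : Type*} [arith.Structure M] {α : Type*} {A B : Set M}

/-- The set of elements definable over `A`. -/
def dcl (A : Set M) : Set M := {y | A.Definable₁ arith {y}}

theorem dcl_mono (h : A ⊆ B) : dcl A ⊆ dcl B := fun _ hy => Set.Definable.mono hy h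

theorem subset_dcl : A ⊆ dcl A := by
  intro a ha
  refine Set.definable_iff_exists_formula_sum.2
    ⟨(Term.var (Sum.inr 0)).equal (Term.var (Sum.inl ⟨a, ha⟩)), ?_⟩
  ext v
  simp [Formula.realize_equal]

theorem definable_of_dcl {D : Set (α → M)} (hD : (dcl A).Definable arith D) :
    A.Definable arith D := by
  obtain ⟨T, hT, hD⟩ := Set.definable_iff_finitely_definable.1 hD
  obtain ⟨φ, rfl⟩ := Set.definable_iff_exists_formula_sum.1 hD
  have hφ : DefPred A fun w : α ⊕ (T : Set M) → M =>
      φ.Realize (Sum.elim (fun s => w (.inr s)) fun i => w (.inl i)) := by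
    have h : DefPred A fun w : (T : Set M) ⊕ α → M => φ.Realize w :=
      Set.Definable.mono (A := ∅) (Set.empty_definable_iff.2 ⟨φ, rfl⟩) (Set.empty_subset _)
    convert! h.comp (Sum.elim Sum.inr Sum.inl) using 3 with w
    ext (i | i) <;> rfl
  have key : DefPred A fun v : α → M => ∃ w : ↥(T : Set M) → M,
      (∀ s, w s = s.1) ∧ φ.Realize (Sum.elim w v) := by
    refine DefPred.exists_tuple (DefPred.and (DefPred.forall_finite fun s => ?_) hφ)
    have : DefPred A fun v : Fin 1 → M => v 0 ∈ ({s.1} : Set M) := hT s.2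
    exact this.comp fun _ => Sum.inr s
  have heq : {v : α → M | φ.Realize (Sum.elim (↑) v)} = {v : α → M | ∃ w : ↥(T : Set M) → M,
      (∀ s, w s = s.1) ∧ φ.Realize (Sum.elim w v)} := by
    ext v
    simp only [Set.mem_ofPred_eq]
    constructor
    · exact fun h => ⟨_, fun _ => rfl, h⟩
    · rintro ⟨w, hw, h⟩
      rwa [show w = (↑) from funext hw] at h
  rw [heq]
  exact key

/-- If definable sets have least elements, then definable closures are elementary. -/
theorem meetsDefinable_dcl (htri : ∀ x y : M, ltM x y ∨ x = y ∨ ltM y x)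
    (hleast : ∀ D : Set M, Set.univ.Definable₁ arith D → D.Nonempty →
      ∃ y ∈ D, ∀ z ∈ D, ¬ ltM z y) (A : Set M) : arith.MeetsDefinable (dcl A) := by
  intro D hne hD
  obtain ⟨y, hyD, hy⟩ := hleast D (Set.Definable.mono hD (Set.subset_univ _)) hne
  refine ⟨y, hyD, ?_⟩
  have hD' : DefPred A fun v : Fin 1 → M => v 0 ∈ D := definable_of_dcl hD
  have key : DefPred A fun v : Fin 1 → M => v 0 ∈ D ∧ ∀ z, z ∈ D → ¬ ltM z (v 0) :=
    hD'.and (DefPred.forall (DefPred.imp (hD'.comp fun _ => none) (by fun_prop)))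
  change DefPred A fun v : Fin 1 → M => v 0 ∈ ({y} : Set M)
  convert! key using 2 with v
  rw [Set.mem_singleton_iff]
  constructor
  · intro h
    rw [h]
    exact ⟨hyD, hy⟩
  · rintro ⟨h₁, h₂⟩
    rcases htri (v 0) y with h | h | h
    · exact absurd h (hy _ h₁)
    · exact h
    · exact absurd h (h₂ _ hyD)

theorem mk_dcl_le {M : Type} [arith.Structure M] (A : Set M) :
    Cardinal.mk (dcl A) ≤ max Cardinal.aleph0 (Cardinal.mk A) := by
  choose φ hφ using fun y : dcl A => Set.definable_iff_exists_formula_sum.1 y.2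
  have hinj : Function.Injective
      fun y => (⟨0, φ y⟩ : Σ n, arith.BoundedFormula (A ⊕ Fin 1) n) := by
    intro y z h
    have h' : φ y = φ z := by simpa using h
    have := hφ y
    rw [h', ← hφ z] at this
    have : (fun _ => y.1) ∈ {x : Fin 1 → M | x 0 ∈ ({z.1} : Set M)} := by
      rw [← this]
      simp
    exact Subtype.ext (by simpa using this)
  refine (Cardinal.mk_le_of_injective hinj).trans (BoundedFormula.card_le.trans ?_)
  have hc : arith.card ≤ Cardinal.aleph0 := Cardinal.mk_le_aleph0
  simp only [Cardinal.lift_id, Cardinal.mk_sum, Cardinal.mk_fin]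
  refine max_le (le_max_left _ _) ?_
  refine Cardinal.add_le_of_le (le_max_left _ _) (Cardinal.add_le_of_le (le_max_left _ _) ?_ ?_) ?_
  · exact le_max_right _ _
  · exact (Cardinal.natCast_lt_aleph0).le.trans (le_max_left _ _)
  · exact hc.trans (le_max_left _ _)

end DefinableClosure

section Ultrapower

/-- The ultrapower of `N` by a non-principal ultrafilter on `ℕ`. -/
abbrev UPow (N : Type) : Type := (Filter.hyperfilter ℕ : Filter ℕ).Product fun _ => N

/-- The class of a sequence in the ultrapower. -/
noncomputable def cls {N : Type} (f : ℕ → N) : UPow N :=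
  (f : (Filter.hyperfilter ℕ : Filter ℕ).Product fun _ => N)

theorem cls_surjective {N : Type} : Function.Surjective (cls (N := N)) := Quotient.exists_rep

variable {N : Type} [arith.Structure N] [PAModel N]

theorem realize_cls {β : Type*} (φ : arith.Formula β) (x : β → ℕ → N) :
    (φ.Realize fun i => cls (x i)) ↔
      ∀ᶠ k in Filter.hyperfilter ℕ, φ.Realize fun i => x i k :=
  Ultraproduct.realize_formula_cast φ x

theorem cls_eq_iff {N : Type} {f g : ℕ → N} :
    cls f = cls g ↔ ∀ᶠ k in Filter.hyperfilter ℕ, f k = g k :=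
  Quotient.eq''

theorem ltM_cls_iff {f g : ℕ → N} :
    ltM (cls f) (cls g) ↔ ∀ᶠ k in Filter.hyperfilter ℕ, ltM (f k) (g k) := by
  have := realize_cls (ltFormula (Term.var 0) (Term.var 1)) ![f, g]
  simpa [realize_ltFormula] using this

theorem digitB_cls_iff {f : ℕ → N} {i : ℕ} :
    digitB (cls f) i ↔ ∀ᶠ k in Filter.hyperfilter ℕ, digitB (f k) i := by
  have := realize_cls (digitFormula i) fun _ => f
  simpa only [realize_digitFormula] using this

/-- The diagonal embedding. -/
noncomputable def diag (N : Type) [arith.Structure N] [PAModel N] : N ↪ₑ[arith] UPow N where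
  toFun b := cls fun _ => b
  map_formula' n φ x := by
    have := realize_cls φ fun i _ => x i
    rw [Filter.eventually_const] at this
    exact this

theorem ltM_trichotomy (x y : UPow N) : ltM x y ∨ x = y ∨ ltM y x := by
  obtain ⟨f, rfl⟩ := cls_surjective x
  obtain ⟨g, rfl⟩ := cls_surjective y
  rw [ltM_cls_iff, ltM_cls_iff, cls_eq_iff, ← Ultrafilter.eventually_or,
    ← Ultrafilter.eventually_or]
  exact Filter.Eventually.of_forall fun k => lt_trichotomy (f k) (g k)

theorem exists_least_upow (D : Set (UPow N)) (hD : Set.univ.Definable₁ arith D)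
    (hne : D.Nonempty) : ∃ y ∈ D, ∀ z ∈ D, ¬ ltM z y := by
  obtain ⟨φ, hφ⟩ := Set.definable_iff_exists_formula_sum.1 hD
  choose r hr using cls_surjective (N := N)
  have hmem : ∀ f : ℕ → N, cls f ∈ D ↔ ∀ᶠ k in Filter.hyperfilter ℕ,
      φ.Realize (Sum.elim (fun b => r b.1 k) fun _ => f k) := by
    intro f
    have h₁ : cls f ∈ D ↔ (fun _ => cls f) ∈ {x : Fin 1 → UPow N | x 0 ∈ D} := Iff.rfl
    rw [h₁, hφ, Set.mem_ofPred_eq]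
    have := realize_cls φ (Sum.elim (fun b => r b.1) fun _ => f)
    convert this using 2
    · ext (b | b)
      · simp [hr]
      · rfl
    · ext k
      apply Iff.of_eq
      congr 1
      ext (b | b) <;> rfl
  have hleast : ∀ k, ∃ y : N, (∃ z, φ.Realize (Sum.elim (fun b => r b.1 k) fun _ => z)) →
      φ.Realize (Sum.elim (fun b => r b.1 k) fun _ => y) ∧
        ∀ z, φ.Realize (Sum.elim (fun b => r b.1 k) fun _ => z) → y ≤ z := by
    intro k
    by_cases h : ∃ z, φ.Realize (Sum.elim (fun b => r b.1 k) fun _ => z)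
    · have hdef : DefPred Set.univ fun v : Fin 1 → N =>
          φ.Realize (Sum.elim (fun b => r b.1 k) fun _ => v 0) := by
        refine Set.definable_iff_exists_formula_sum.2
          ⟨φ.relabel (Sum.map (fun b => ⟨r b.1 k, trivial⟩) id), Set.ext fun w => ?_⟩
        simp only [Set.mem_ofPred_eq, Formula.realize_relabel, Sum.elim_comp_map]
        apply Iff.of_eq
        congr 1
        ext (b | b)
        · rfl
        · simp [Subsingleton.elim b 0]
      obtain ⟨y, hy⟩ := PAModel.exists_least hdef h
      exact ⟨y, fun _ => hy⟩
    · exact ⟨0, fun h' => absurd h' h⟩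
  choose y hy using hleast
  obtain ⟨x, hx⟩ := hne
  obtain ⟨f, rfl⟩ := cls_surjective x
  rw [hmem] at hx
  refine ⟨cls y, (hmem y).2 (hx.mono fun k hk => (hy k ⟨_, hk⟩).1), fun z hz hlt => ?_⟩
  obtain ⟨g, rfl⟩ := cls_surjective z
  rw [hmem] at hz
  rw [ltM_cls_iff] at hlt
  obtain ⟨k, h₁, h₂⟩ := (hz.and hlt).exists
  exact absurd h₂ (not_lt_of_ge ((hy k ⟨_, h₁⟩).2 _ h₁))

end Ultrapower
end Arith

namespace Arith

section Main

variable {N : Type} [arith.Structure N] [PAModel N]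

/-- The element of the ultrapower given by the values along the branch `x`. -/
noncomputable def branch (d : ∀ k, Str k → N) (x : Set ℕ) : UPow N :=
  cls fun k => d k (restr x k)

/-- The generators of the model associated with `X`. -/
def generators (d : ∀ k, Str k → N) (X : Set (Set ℕ)) : Set (UPow N) :=
  Set.range (diag N) ∪ Set.image (branch d) X

/-- The elementary substructure associated with `X`. -/
noncomputable def family (d : ∀ k, Str k → N) (X : Set (Set ℕ)) :
    arith.ElementarySubstructure (UPow N) :=
  (meetsDefinable_dcl ltM_trichotomy exists_least_upow (generators d X)).toElementarySubstructure

theorem coe_family (d : ∀ k, Str k → N) (X : Set (Set ℕ)) :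
    (family d X : Set (UPow N)) = dcl (generators d X) :=
  (meetsDefinable_dcl ltM_trichotomy exists_least_upow (generators d X)).closure_eq_self

theorem generators_mono (d : ∀ k, Str k → N) {X Y : Set (Set ℕ)} (h : X ⊆ Y) :
    generators d X ⊆ generators d Y :=
  Set.union_subset_union_right _ (Set.image_mono h)

theorem exists_formula_of_mem_dcl {d : ∀ k, Str k → N} {X : Set (Set ℕ)} {f : ℕ → N}
    (hf : cls f ∈ dcl (generators d X)) :
    ∃ (n : ℕ) (φ : arith.Formula (N ⊕ Fin n ⊕ Unit)) (x : Fin n → Set ℕ),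
      Function.Injective x ∧ Set.range x ⊆ X ∧ ∀ᶠ k in Filter.hyperfilter ℕ, ∀ z,
        φ.Realize (Sum.elim id (Sum.elim (fun j => d k (restr (x j) k)) fun _ => z)) ↔
          z = f k := by
  classical
  obtain ⟨T, hT, hdef⟩ := Set.definable_iff_finitely_definable.1 hf
  obtain ⟨φ, hφ⟩ := Set.definable_iff_exists_formula_sum.1 hdef
  obtain ⟨R, hRX, hR⟩ := Finset.subset_set_image_iff.1
    (show ((T.filter (· ∉ Set.range (diag N)) : Finset (UPow N)) : Set (UPow N)) ⊆
        Set.image (branch d) X from fun t ht => by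
      rw [Finset.coe_filter] at ht
      exact (hT ht.1).resolve_left ht.2)
  let x : Fin R.card → Set ℕ := fun j => (R.equivFin.symm j).1
  have hx : Function.Injective x := Subtype.val_injective.comp R.equivFin.symm.injective
  have hxR : Set.range x = R := by
    ext y
    constructor
    · rintro ⟨j, rfl⟩
      exact (R.equivFin.symm j).2
    · intro hy
      exact ⟨R.equivFin ⟨y, hy⟩, by simp [x]⟩
  have hg : ∀ t : (T : Set (UPow N)), ∃ g : N ⊕ Fin R.card,
      Sum.elim (diag N) (fun j => branch d (x j)) g = t.1 := by
    intro t
    by_cases ht : t.1 ∈ Set.range (diag N)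
    · obtain ⟨b, hb⟩ := ht
      exact ⟨Sum.inl b, hb⟩
    · have : t.1 ∈ R.image (branch d) := by
        rw [hR, Finset.mem_filter]
        exact ⟨t.2, ht⟩
      obtain ⟨y, hy, hyt⟩ := Finset.mem_image.1 this
      have hy' : y ∈ Set.range x := by
        rw [hxR]
        exact hy
      obtain ⟨j, rfl⟩ := hy'
      exact ⟨Sum.inr j, hyt⟩
  choose g hg using hg
  let ψ : arith.Formula (N ⊕ Fin R.card ⊕ Unit) := φ.relabel
    (Sum.elim (fun t => (g t).elim Sum.inl fun j => Sum.inr (Sum.inl j))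
      fun _ => Sum.inr (Sum.inr ()))
  have hψ : ∀ h : ℕ → N, cls h = cls f ↔ ∀ᶠ k in Filter.hyperfilter ℕ,
      ψ.Realize (Sum.elim id (Sum.elim (fun j => d k (restr (x j) k)) fun _ => h k)) := by
    intro h
    have h₁ : cls h = cls f ↔ (fun _ => cls h) ∈ {v : Fin 1 → UPow N | v 0 ∈ ({cls f} : Set _)} :=
      Iff.rfl
    have h₂ := realize_cls ψ
      (Sum.elim (fun b _ => b) (Sum.elim (fun j k => d k (restr (x j) k)) fun _ : Unit => h))
    rw [h₁, hφ, Set.mem_ofPred_eq]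
    have h₃ : ∀ k, (fun i => Sum.elim (fun b _ => b)
        (Sum.elim (fun j k => d k (restr (x j) k)) fun _ : Unit => h) i k) =
        Sum.elim id (Sum.elim (fun j => d k (restr (x j) k)) fun _ : Unit => h k) := by
      intro k
      ext (b | b | b) <;> rfl
    simp only [h₃] at h₂
    rw [← h₂]
    simp only [ψ, Formula.realize_relabel]
    apply Iff.of_eq
    congr 1
    ext (t | t)
    · simp only [Sum.elim_inl, Function.comp_apply, ← hg t]
      rcases g t with b | j <;> rfl
    · rfl
  refine ⟨R.card, ψ, x, hx, by rw [hxR]; exact hRX, ?_⟩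
  have hself := (hψ f).1 rfl
  by_contra H
  rw [← Ultrafilter.eventually_not] at H
  have H' : ∀ᶠ k in Filter.hyperfilter ℕ, ∃ z, z ≠ f k ∧
      ψ.Realize (Sum.elim id (Sum.elim (fun j => d k (restr (x j) k)) fun _ => z)) := by
    filter_upwards [H, hself] with k hk hk'
    by_contra! hcon
    refine hk fun z => ⟨fun hz => ?_, fun hz => hz ▸ hk'⟩
    by_contra hne
    exact hcon z hne hz
  choose h hh using fun k => show ∃ z : N, (∃ z, z ≠ f k ∧
      ψ.Realize (Sum.elim id (Sum.elim (fun j => d k (restr (x j) k)) fun _ => z))) → z ≠ f k ∧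
      ψ.Realize (Sum.elim id (Sum.elim (fun j => d k (restr (x j) k)) fun _ => z)) by
    by_cases hex : ∃ z, z ≠ f k ∧
      ψ.Realize (Sum.elim id (Sum.elim (fun j => d k (restr (x j) k)) fun _ => z))
    · exact hex.imp fun _ hz _ => hz
    · exact ⟨0, fun h => absurd h hex⟩
  have heq := cls_eq_iff.1 ((hψ h).2 (H'.mono fun k hk => (hh k hk).2))
  obtain ⟨k, hk, hk'⟩ := (heq.and H').exists
  exact (hh k hk').1 hk

theorem not_eventually_iff_eventually {ι : Type*} {U : Ultrafilter ι} {p q : ι → Prop}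
    (h : ∀ᶠ k in U, ¬ (p k ↔ q k)) : ¬ ((∀ᶠ k in U, p k) ↔ ∀ᶠ k in U, q k) := by
  intro H
  by_cases hp : ∀ᶠ k in U, p k
  · obtain ⟨k, hk, hpk, hqk⟩ := (h.and (hp.and (H.1 hp))).exists
    exact hk (iff_of_true hpk hqk)
  · obtain ⟨k, hk, hpk, hqk⟩ := (h.and ((Ultrafilter.eventually_not.2 hp).and
      (Ultrafilter.eventually_not.2 (mt H.2 hp)))).exists
    exact hk (iff_of_false hpk hqk)

namespace PAModel.IsGeneric

variable {A : Set (Set ℕ)} {d : ∀ k, Str k → N} {X : Set (Set ℕ)}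

theorem exists_digitB_ne (hd : IsGeneric A d) {y : UPow N} (hy : y ∈ dcl (generators d X)) :
    (∀ a ∈ A, ∃ i, ¬ (digitB y i ↔ i ∈ a)) ∧
      ∀ x₀ ∉ X, ∃ i, ¬ (digitB y i ↔ digitB (branch d x₀) i) := by
  obtain ⟨f, rfl⟩ := cls_surjective y
  obtain ⟨n, φ, x, hx, hxX, hev⟩ := exists_formula_of_mem_dcl hy
  have key : ∀ {i : ℕ} {q : ℕ → Prop}, (∀ᶠ k in Filter.atTop, ¬ (PAModel.DigOf (fun y => φ.Realize
      (Sum.elim id (Sum.elim (fun j => d k (restr (x j) k)) fun _ => y))) ((2 ^ i : ℕ) : N) ↔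
        q k)) → ¬ (digitB (cls f) i ↔ ∀ᶠ k in Filter.hyperfilter ℕ, q k) := by
    intro i q h
    rw [digitB_cls_iff]
    refine not_eventually_iff_eventually ?_
    filter_upwards [h.filter_mono Nat.hyperfilter_le_atTop, hev] with k hk hk'
    simpa only [PAModel.DigOf, hk', exists_eq_left, ← PAModel.digitB_iff] using hk
  refine ⟨fun a ha => ?_, fun x₀ hx₀ => ?_⟩
  · obtain ⟨i, hi⟩ := (hd n φ x hx).1 a ha
    refine ⟨i, ?_⟩
    simpa only [Filter.eventually_const] using key hi
  · obtain ⟨i, hi⟩ := (hd n φ x hx).2 x₀ fun h => hx₀ (hxX h)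
    refine ⟨i, ?_⟩
    rw [branch, digitB_cls_iff (f := fun k => d k (restr x₀ k))]
    exact key hi

theorem not_isStd_branch (hd : IsGeneric A d) (x : Set ℕ) : ¬ IsStd (branch d x) := by
  rintro ⟨n, hn⟩
  rw [← map_numeral (diag N)] at hn
  have hy : branch d x ∈ dcl (generators d ∅) := by
    rw [hn]
    exact subset_dcl (Or.inl ⟨_, rfl⟩)
  obtain ⟨i, hi⟩ := (hd.exists_digitB_ne hy).2 x (Set.notMem_empty x)
  exact hi Iff.rfl

theorem branch_mem_SSy_iff (hd : IsGeneric A d) {x : Set ℕ} :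
    {i | digitB (branch d x) i} ∈ SSy (family d X) ↔ x ∈ X := by
  constructor
  · intro h
    obtain ⟨y, hy, -, hyi⟩ := mem_SSy_elementarySubstructure.1 h
    by_contra hx
    rw [← SetLike.mem_coe, coe_family] at hy
    obtain ⟨i, hi⟩ := (hd.exists_digitB_ne hy).2 x hx
    exact hi (hyi i).symm
  · intro hx
    refine mem_SSy_elementarySubstructure.2
      ⟨branch d x, ?_, hd.not_isStd_branch x, fun _ => Iff.rfl⟩
    rw [← SetLike.mem_coe, coe_family]
    exact subset_dcl (Or.inr ⟨x, hx, rfl⟩)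

theorem not_mem_SSy (hd : IsGeneric A d) {a : Set ℕ} (ha : a ∈ A) : a ∉ SSy (family d X) := by
  intro h
  obtain ⟨y, hy, -, hyi⟩ := mem_SSy_elementarySubstructure.1 h
  rw [← SetLike.mem_coe, coe_family] at hy
  obtain ⟨i, hi⟩ := (hd.exists_digitB_ne hy).1 a ha
  exact hi (hyi i).symm

theorem injective_branch_digits (hd : IsGeneric A d) :
    Function.Injective fun x => {i | digitB (branch d x) i} := by
  intro x y h
  have : {i | digitB (branch d x) i} ∈ SSy (family d {y}) := by
    rw [show {i | digitB (branch d x) i} = _ from h]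
    exact hd.branch_mem_SSy_iff.2 rfl
  exact Set.mem_singleton_iff.1 ((hd.branch_mem_SSy_iff (x := x) (X := {y})).1 this)

end PAModel.IsGeneric

theorem family_mono (d : ∀ k, Str k → N) {X Y : Set (Set ℕ)} (h : X ⊆ Y) :
    (family d X : Set (UPow N)) ⊆ family d Y := by
  rw [coe_family, coe_family]
  exact dcl_mono (generators_mono d h)

theorem range_diag_subset_family (d : ∀ k, Str k → N) (X : Set (Set ℕ)) :
    Set.range (diag N) ⊆ (family d X : Set (UPow N)) := by
  rw [coe_family]
  exact Set.subset_union_left.trans subset_dcl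

theorem SSy_mono {M : Type*} [arith.Structure M] {S T : arith.ElementarySubstructure M}
    (h : (S : Set M) ⊆ T) : SSy S ⊆ SSy T := by
  intro a ha
  obtain ⟨y, hy, h'⟩ := mem_SSy_elementarySubstructure.1 ha
  exact mem_SSy_elementarySubstructure.2 ⟨y, h hy, h'⟩

theorem SSy_subset_SSy_family (d : ∀ k, Str k → N) (X : Set (Set ℕ)) :
    SSy N ⊆ SSy (family d X) := by
  rintro a ⟨y, hy, h⟩
  exact mem_SSy_elementarySubstructure.2 ⟨diag N y, range_diag_subset_family d X ⟨y, rfl⟩,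
    mt (isStd_map_iff _).1 hy, fun i => (h i).trans (digitB_map_iff _).symm⟩

theorem singleton_mem_SSy (hN : ∃ x : N, ¬ IsStd x) (m : ℕ) : {m} ∈ SSy N := by
  have hdef : DefPred Set.univ fun v : Fin 1 → N => v 0 = ((2 ^ m : ℕ) : N) := by fun_prop
  convert PAModel.mem_SSy_of_defPred (P := fun p => p = ((2 ^ m : ℕ) : N)) hN hdef using 1
  ext i
  simp only [Set.mem_singleton_iff, Set.mem_ofPred_eq, Nat.cast_inj]
  exact (Nat.pow_right_injective le_rfl).eq_iff.symm

theorem mk_SSy_le (M : Type) [arith.Structure M] : Cardinal.mk (SSy M) ≤ Cardinal.mk M := by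
  refine (Cardinal.mk_le_mk_of_subset (t := Set.range fun y : M => {i | digitB y i}) ?_).trans
    Cardinal.mk_range_le
  rintro a ⟨y, -, h⟩
  exact ⟨y, Set.ext fun i => (h i).symm⟩

theorem mk_family_le [Countable N] (d : ∀ k, Str k → N) (X : Set (Set ℕ)) :
    Cardinal.mk (family d X) ≤ max Cardinal.aleph0 (Cardinal.mk X) := by
  have h : Cardinal.mk (family d X) = Cardinal.mk (dcl (generators d X)) := by
    rw [← coe_family]
    rfl
  rw [h]
  refine (mk_dcl_le _).trans (max_le (le_max_left _ _) ((Cardinal.mk_union_le _ _).trans ?_))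
  exact Cardinal.add_le_of_le (le_max_left _ _)
    ((Cardinal.mk_range_le.trans Cardinal.mk_le_aleph0).trans (le_max_left _ _))
    (Cardinal.mk_image_le.trans (le_max_right _ _))

theorem PAModel.IsGeneric.le_mk_SSy_family {A : Set (Set ℕ)} {d : ∀ k, Str k → N}
    (hd : IsGeneric A d)
    (hN : ∃ x : N, ¬ IsStd x) (X : Set (Set ℕ)) :
    max Cardinal.aleph0 (Cardinal.mk X) ≤ Cardinal.mk (SSy (family d X)) := by
  refine max_le ?_ ?_
  · rw [← Cardinal.mk_nat]
    refine Cardinal.mk_le_of_injective (f := fun m : ℕ =>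
      (⟨{m}, SSy_subset_SSy_family d X (singleton_mem_SSy hN m)⟩ : SSy (family d X))) ?_
    intro m n h
    exact Set.singleton_injective (Subtype.mk.inj h)
  · refine Cardinal.mk_le_of_injective (f := fun x : X =>
      (⟨_, hd.branch_mem_SSy_iff.2 x.2⟩ : SSy (family d X))) ?_
    intro x y h
    exact Subtype.ext (hd.injective_branch_digits (Subtype.mk.inj h))

end Main
end Arith

open Arith in
/-- Strengthening of the previous statement: given in addition a countable set
`A ⊆ 2^ω − SSy(N)`, the family can be chosen with `A ∩ SSy(M_X) = ∅` for all `X`. -/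
theorem statement_6 (N : Type) [arith.Structure N] (hN : NonstandardModel N)
    (hNc : Countable N) (A : Set (Set ℕ)) (hA : A.Countable) (hAN : A ∩ SSy N = ∅) :
    ∃ (N' : Type) (_ : arith.Structure N') (e : N ↪ₑ[arith] N')
      (Mfam : Set (Set ℕ) → arith.ElementarySubstructure N'),
      (∀ X : Set (Set ℕ), Set.range e ⊆ (Mfam X : Set N')) ∧
      (∀ X : Set (Set ℕ),
        Cardinal.mk (Mfam X) = max Cardinal.aleph0 (Cardinal.mk X) ∧
        Cardinal.mk (SSy (Mfam X)) = max Cardinal.aleph0 (Cardinal.mk X)) ∧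
      (∀ X Y : Set (Set ℕ),
        (X ⊆ Y ↔ (Mfam X : Set N') ⊆ (Mfam Y : Set N')) ∧
        (X ⊆ Y ↔ SSy (Mfam X) ⊆ SSy (Mfam Y))) ∧
      (∀ X : Set (Set ℕ), A ∩ SSy (Mfam X) = ∅) := by
  have : PAModel N := ⟨hN.1⟩
  have hNs := PAModel.exists_not_isStd hN
  obtain ⟨d, hd⟩ := PAModel.exists_generic_formula hNs hA fun a ha h =>
    (Set.ext_iff.1 hAN a).1 ⟨ha, h⟩
  have hcard : ∀ X : Set (Set ℕ),
      max Cardinal.aleph0 (Cardinal.mk X) ≤ Cardinal.mk (SSy (family d X)) ∧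
      Cardinal.mk (SSy (family d X)) ≤ Cardinal.mk (family d X) ∧
      Cardinal.mk (family d X) ≤ max Cardinal.aleph0 (Cardinal.mk X) := fun X =>
    ⟨hd.le_mk_SSy_family hNs X, mk_SSy_le _, mk_family_le d X⟩
  have hsub : ∀ X Y : Set (Set ℕ), SSy (family d X) ⊆ SSy (family d Y) → X ⊆ Y :=
    fun X Y h x hx => hd.branch_mem_SSy_iff.1 (h (hd.branch_mem_SSy_iff.2 hx))
  refine ⟨UPow N, inferInstance, diag N, family d, range_diag_subset_family d, fun X => ?_,
    fun X Y => ⟨⟨family_mono d, fun h => hsub X Y (SSy_mono h)⟩,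
      ⟨fun h => SSy_mono (family_mono d h), hsub X Y⟩⟩, fun X => ?_⟩
  · obtain ⟨h₁, h₂, h₃⟩ := hcard X
    exact ⟨h₃.antisymm (h₁.trans h₂), (h₂.trans h₃).antisymm h₁⟩
  · exact Set.eq_empty_iff_forall_notMem.2 fun a ha => hd.not_mem_SSy ha.1 ha.2
end

section
/- Let p⃗ = (p_i : i ∈ ω) be a descending sequence of conditions in the poset P with lim_i n_{p_i} = ∞, and let G_{p⃗} be the set of formulas φ(x_{f₁}, …, x_{f_k}) with f₁, …, f_k ∈ 2^ω such that the n_{p_i}-reduct of φ belongs to p_i for some i. Then G_{p⃗} is a type of N, i.e., every finite subset of G_{p⃗} is realized in N. -/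
open FirstOrder FirstOrder.Language

namespace Arith

variable {N : Type*} [arith.Structure N]

/-- Formulas with constants for all elements of `N`, in free variables `x_σ` indexed by
binary sequences `σ ∈ 2^n`. -/
abbrev CFormula (N : Type*) [arith.Structure N] (n : ℕ) : Type _ :=
  (arith[[N]]).Formula (Fin n → Bool)

/-- `d^k` for standard `k`. -/
def powStd (d : N) : ℕ → N
  | 0 => oneM N
  | k + 1 => mulM (powStd d k) d

/-- The binary sequence of length `n` coded by `j < 2^n`. -/
def binOfFin {n : ℕ} (j : Fin (2 ^ n)) : Fin n → Bool := fun i => j.val.testBit i.val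

/-- The code `∑_σ b_σ · d^(rank σ)` of a tuple `(b_σ : σ ∈ 2^n)` of elements below `d`,
in base `d`. -/
def tupleCode (d : N) {n : ℕ} (b : (Fin n → Bool) → N) : N :=
  (List.finRange (2 ^ n)).foldr
    (fun j acc => addM (mulM (b (binOfFin j)) (powStd d j.val)) acc) (zeroM N)

/-- `b` realizes all formulas in `fmls`. -/
def RealizesAll {n : ℕ} (fmls : Set (CFormula N n)) (b : (Fin n → Bool) → N) : Prop :=
  ∀ φ ∈ fmls, φ.Realize b

/-- The set of codes of tuples realizing `fmls` in `N`; this represents the internal set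
`p(N)` of realizations of a condition. -/
def realizationCodes (d : N) {n : ℕ} (fmls : Set (CFormula N n)) : Set N :=
  {e | ∃ b : (Fin n → Bool) → N, RealizesAll fmls b ∧ e = tupleCode d b}

/-- A condition: a finite type `p` of `N` in the variables `(x_σ : σ ∈ 2^{n_p})`
(with parameters from `N`, and no quantifiers over any `x_σ`), such that `p ⊢ x_σ < d`
(where `d = 2^a`), and such that for some positive rational `r = u/v`, internally in `N`,
`|p(N)| > r · d^(2^{n_p})`. -/
structure Condition (N : Type*) [arith.Structure N] (d : N) : Type _ where
  n : ℕ
  fmls : Set (CFormula N n)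
  finite : fmls.Finite
  realizable : ∃ b : (Fin n → Bool) → N, RealizesAll fmls b
  bounded : ∀ b : (Fin n → Bool) → N, RealizesAll fmls b → ∀ σ : Fin n → Bool, ltM (b σ) d
  large : ∃ (u v : ℕ) (c : N), 0 < u ∧ 0 < v ∧
    InternalCard (realizationCodes d fmls) c ∧
    ltM (mulM (numeral N u) (powStd d (2 ^ n))) (mulM (numeral N v) c)

/-- The `m`-reduct of a formula in the variables `(x_σ : σ ∈ 2^n)`: substitute
`x_{σ↾m}` for `x_σ`. -/
def reduct {n m : ℕ} (h : m ≤ n) (φ : CFormula N n) : CFormula N m :=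
  φ.relabel fun σ => fun i => σ (Fin.castLE h i)

/-- The order on conditions: `q ≤ p` iff `n_q ≥ n_p` and `q` contains every
`n_q`-ramification of every formula in `p` (i.e. every formula whose `n_p`-reduct lies
in `p`). -/
def CondLE {d : N} (q p : Condition N d) : Prop :=
  ∃ h : p.n ≤ q.n, ∀ ψ : CFormula N q.n, reduct h ψ ∈ p.fmls → ψ ∈ q.fmls

/-- Formulas in the variables `(x_f : f ∈ 2^ω)` with constants from `N`. -/
abbrev CFormulaInf (N : Type*) [arith.Structure N] : Type _ :=
  (arith[[N]]).Formula (ℕ → Bool)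

/-- The `m`-reduct of a formula in the variables `(x_f : f ∈ 2^ω)`: substitute
`x_{f↾m}` for `x_f`. -/
def reductInf {m : ℕ} (φ : CFormulaInf N) : CFormula N m :=
  φ.relabel fun f => fun i => f i.val

end Arith

/-- Relabelling free variables twice amounts to relabelling along the composite, up to the cast
between `0 + (0 + k)` and `0 + k` bound variables. -/
theorem FirstOrder.Language.BoundedFormula.relabel_inl_relabel_inl {L : FirstOrder.Language}
    {α β γ : Type*} (f : α → β) (g : β → γ) {k : ℕ} (φ : L.BoundedFormula α k) :
    ((φ.relabel (Sum.inl ∘ f : α → β ⊕ Fin 0)).relabel (Sum.inl ∘ g : β → γ ⊕ Fin 0)) =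
      (φ.relabel (Sum.inl ∘ (g ∘ f) : α → γ ⊕ Fin 0)).castLE (zero_add (0 + k)).ge := by
  have aux (k : ℕ) : BoundedFormula.relabelAux (Sum.inl ∘ g : β → γ ⊕ Fin 0) (0 + k) ∘
      BoundedFormula.relabelAux (Sum.inl ∘ f : α → β ⊕ Fin 0) k =
      Sum.map id (Fin.castLE (zero_add (0 + k)).ge) ∘
        BoundedFormula.relabelAux (Sum.inl ∘ (g ∘ f) : α → γ ⊕ Fin 0) k := by
    funext x
    rcases x with x | x
    · rfl
    · simp [BoundedFormula.relabelAux, Fin.ext_iff]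
  induction φ with
  | falsum => rfl
  | equal t₁ t₂ =>
    simp only [BoundedFormula.relabel, BoundedFormula.mapTermRel, BoundedFormula.castLE,
      Term.relabel_relabel, aux]
  | rel R ts =>
    simp only [BoundedFormula.relabel, BoundedFormula.mapTermRel, BoundedFormula.castLE,
      id, Term.relabel_relabel, aux]
    congr 1
    funext i
    exact (Term.relabel_relabel _ _ (ts i)).symm
  | imp _ _ ih₁ ih₂ => simp only [BoundedFormula.relabel_imp, BoundedFormula.castLE, ih₁, ih₂]
  | all _ ih => simp only [BoundedFormula.relabel_all, BoundedFormula.castLE, ih]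

theorem FirstOrder.Language.Formula.relabel_relabel {L : FirstOrder.Language}
    {α β γ : Type*} (f : α → β) (g : β → γ) (φ : L.Formula α) :
    (φ.relabel f).relabel g = φ.relabel (g ∘ f) :=
  (BoundedFormula.relabel_inl_relabel_inl f g φ).trans (BoundedFormula.castLE_rfl _ _)

namespace Arith

variable {N : Type*} [arith.Structure N]

theorem reduct_reductInf {m n : ℕ} (h : m ≤ n) (φ : CFormulaInf N) :
    reduct h (reductInf φ) = reductInf φ :=
  Formula.relabel_relabel _ _ φ

theorem reductInf_mem_of_condLE {d : N} {p q : Condition N d} (h : CondLE q p)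
    {φ : CFormulaInf N} (hφ : reductInf φ ∈ p.fmls) : reductInf φ ∈ q.fmls := by
  obtain ⟨hn, hq⟩ := h
  exact hq _ (by rwa [reduct_reductInf])

theorem reductInf_mem_of_le {d : N} {p : ℕ → Condition N d}
    (hdesc : ∀ i, CondLE (p (i + 1)) (p i)) {φ : CFormulaInf N} {i j : ℕ} (hij : i ≤ j)
    (hφ : reductInf φ ∈ (p i).fmls) : reductInf φ ∈ (p j).fmls :=
  Nat.le_induction hφ (fun k _ hk => reductInf_mem_of_condLE (hdesc k) hk) j hij

end Arith

open Arith in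
/-- If `(p_i : i ∈ ω)` is a descending sequence of conditions with `lim_i n_{p_i} = ∞`,
then the set `G` of formulas in the variables `(x_f : f ∈ 2^ω)` whose `n_{p_i}`-reduct
lies in `p_i` for some `i` is a type of `N`: every finite subset of `G` is realized
in `N`. -/
theorem statement_7 (N : Type*) [arith.Structure N] (hN : NonstandardModel N)
    (hNc : Countable N) (a d : N) (ha : ¬ IsStd a) (hd : IsPow2 a d)
    (p : ℕ → Condition N d)
    (hdesc : ∀ i : ℕ, CondLE (p (i + 1)) (p i))
    (hlim : Filter.Tendsto (fun i => (p i).n) Filter.atTop Filter.atTop)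
    (G : Set (CFormulaInf N))
    (hG : G = {φ | ∃ i : ℕ, reductInf (m := (p i).n) φ ∈ (p i).fmls}) :
    ∀ s : Set (CFormulaInf N), s ⊆ G → s.Finite →
      ∃ b : (ℕ → Bool) → N, ∀ φ ∈ s, φ.Realize b := by
  subst hG
  intro s hs hfin
  choose! i hi using hs
  obtain ⟨j, hj⟩ := (hfin.image i).bddAbove
  obtain ⟨b, hb⟩ := (p j).realizable
  refine ⟨fun f => b fun k => f k, fun φ hφ => ?_⟩
  exact Formula.realize_relabel.mp
    (hb _ (reductInf_mem_of_le hdesc (hj ⟨φ, hφ, rfl⟩) (hi hφ)))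
end
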